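/- arXiv:1811.07735 — 5 statements merged into one kernel-verified Lean document; each statement's English description precedes it below -/
import Mathlib

section
/- Let α ∈ ℂ satisfy α² − α + 1 = 0. Set ω = y²(6αx² − 4(α+1)xy + 3y²)dx − (2α−1)x⁴dy and let φ be the linear map φ(x,y) = ((α−2)x, y). Then ω₅ := y²(6x²+4xy+y²)dx + 3x⁴dy satisfies ω₅ = ((1−α)/(α−2)³)·φ*ω. -/
open MvPolynomial

noncomputable section

/-- Polynomials in two variables `x = X 0`, `y = X 1` over `ℂ`. -/
abbrev P2 : Type := MvPolynomial (Fin 2) ℂ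

/-- Pullback of the 1-form `ω = A dx + B dy` by the polynomial map `φ = (φ₁, φ₂)`:
`φ*ω = (A∘φ)dφ₁ + (B∘φ)dφ₂`, returned as the pair of its `dx`- and `dy`-coefficients. -/
def pullback (φ₁ φ₂ A B : P2) : P2 × P2 :=
  (aeval ![φ₁, φ₂] A * pderiv 0 φ₁ + aeval ![φ₁, φ₂] B * pderiv 0 φ₂,
   aeval ![φ₁, φ₂] A * pderiv 1 φ₁ + aeval ![φ₁, φ₂] B * pderiv 1 φ₂)

/-- For `α² − α + 1 = 0` and `φ(x,y) = ((α−2)x, y)`, one has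
`ω₅ = ((1−α)/(α−2)³)·φ*ω` where `ω = y²(6αx² − 4(α+1)xy + 3y²)dx − (2α−1)x⁴dy`. -/
theorem omega5_pullback (α : ℂ) (hα : α ^ 2 - α + 1 = 0) :
    (X 1 ^ 2 * (6 * X 0 ^ 2 + 4 * X 0 * X 1 + X 1 ^ 2), 3 * X 0 ^ 4) =
      (C ((1 - α) / (α - 2) ^ 3) *
        (pullback (C (α - 2) * X 0) (X 1)
          (X 1 ^ 2 * (6 * C α * X 0 ^ 2 - 4 * (C α + 1) * X 0 * X 1 + 3 * X 1 ^ 2))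
          (-((2 * C α - 1) * X 0 ^ 4))).1,
       C ((1 - α) / (α - 2) ^ 3) *
        (pullback (C (α - 2) * X 0) (X 1)
          (X 1 ^ 2 * (6 * C α * X 0 ^ 2 - 4 * (C α + 1) * X 0 * X 1 + 3 * X 1 ^ 2))
          (-((2 * C α - 1) * X 0 ^ 4))).2) := by
  have h2 : α - 2 ≠ 0 := by
    intro h
    have : α = 2 := by linear_combination h
    subst this
    norm_num at hα
  have hc : (1 - α) / (α - 2) ^ 3 = (1 / 9) * (-(α + 1)) := by
    rw [div_eq_iff (pow_ne_zero 3 h2)]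
    linear_combination (1 / 9) * (α ^ 2 - 4 * α + 1) * hα
  have ht : (C (1 / 9 : ℂ) : P2) * 9 = 1 := by
    have : (9 : P2) = C (9 : ℂ) := (map_ofNat C 9).symm
    rw [this, ← C_mul]
    norm_num
  have ha : (C α : P2) ^ 2 - C α + 1 = 0 := by
    have := congrArg (C : ℂ → P2) hα
    simpa using this
  have hC2 : (C (2 : ℂ) : P2) = 2 := map_ofNat C 2
  have h01 : (pderiv (0 : Fin 2)) (X 1 : P2) = 0 := pderiv_X_of_ne (by decide)
  have h10 : (pderiv (1 : Fin 2)) (X 0 : P2) = 0 := pderiv_X_of_ne (by decide)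
  have hA : ∀ f : Fin 2 → P2, ∀ c : ℂ, aeval f (C c : P2) = C c := by
    intro f c
    simp [algebraMap_eq]
  have d0 : pderiv (0 : Fin 2) (C (α - 2) * X 0 : P2) = C (α - 2) := by
    rw [pderiv_C_mul, pderiv_X_self, mul_one]
  have d1 : pderiv (1 : Fin 2) (C (α - 2) * X 0 : P2) = 0 := by
    rw [pderiv_C_mul, h10, mul_zero]
  rw [hc]
  simp only [pullback, d0, d1]
  simp only [map_mul, map_add, map_sub, map_neg, map_pow, map_one, map_ofNat, aeval_X,
    hA, Matrix.cons_val_zero, Matrix.cons_val_one, pderiv_X_self, h01, hC2]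
  clear d0 d1
  generalize (C (1 / 9 : ℂ) : P2) = t at *
  generalize (C α : P2) = a at *
  generalize (X 0 : P2) = x at *
  generalize (X 1 : P2) = y at *
  have hp : (a + 1) * (a - 2) = -3 := by linear_combination ha
  have e1 : a * (a - 2) ^ 2 = 3 := by linear_combination (a - 3) * ha
  have e2 : (a + 1) * (2 * a - 1) * (a - 2) ^ 4 = 27 := by
    linear_combination (2 * a - 1) * (a - 2) ^ 3 * hp - 3 * ((2 * a ^ 2 - 5 * a + 2) + 6 - 6 * a + 9) * ha
  refine Prod.ext ?_ ?_
  · simp only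
    linear_combination (-(y ^ 2 * (6 * x ^ 2 + 4 * x * y + y ^ 2))) * ht +
      t * y ^ 2 * (6 * a * (a - 2) ^ 2 * x ^ 2 - 4 * (a + 1) * (a - 2) * x * y + 3 * y ^ 2) * hp -
      3 * t * y ^ 2 * (6 * x ^ 2 * e1 - 4 * x * y * hp)
  · simp only
    linear_combination (-(3 * x ^ 4)) * ht - t * x ^ 4 * e2
end
end

section
/- Let F be a reduced convex foliation of degree d ≥ 1 on ℙ²(ℂ) defined by ω = a dx + b dy + c dz (so F admits 3d pairwise non-proportional invariant lines), and suppose a(0,0,1) = b(0,0,1) = 0, so s = [0:0:1] is a singular point of F. Then the number of the 3d invariant lines of F passing through s (i.e. whose defining linear forms vanish at (0,0,1)) equals the order of vanishing at (0,0) of the two-variable polynomial c(x,y,1); this order equals τ(F,s) + 1, where τ(F,s) is the tangency order of F with a generic line through s. -/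
open MvPolynomial

noncomputable section

/-- Polynomials in three variables `x = X 0`, `y = X 1`, `z = X 2` over `ℂ`. -/
abbrev P3 : Type := MvPolynomial (Fin 3) ℂ

/-- The linear form `αx + βy + γz` with coefficient vector `l = (α, β, γ)`. -/
def lin (l : Fin 3 → ℂ) : P3 := C (l 0) * X 0 + C (l 1) * X 1 + C (l 2) * X 2

/-- The line `{αx + βy + γz = 0}` is invariant by the foliation defined by
`ω = a dx + b dy + c dz`: the linear form divides the coefficients of `ω ∧ dℓ`. -/
def InvLine (a b c : P3) (l : Fin 3 → ℂ) : Prop :=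
  l ≠ 0 ∧
  lin l ∣ (C (l 1) * a - C (l 0) * b) ∧
  lin l ∣ (C (l 2) * a - C (l 0) * c) ∧
  lin l ∣ (C (l 2) * b - C (l 1) * c)

/-- `(a, b, c)` defines a foliation of degree `d` on `ℙ²(ℂ)`: homogeneous of degree
`d+1`, without common factor, satisfying the Euler condition. -/
def IsFoliation (d : ℕ) (a b c : P3) : Prop :=
  a.IsHomogeneous (d + 1) ∧ b.IsHomogeneous (d + 1) ∧ c.IsHomogeneous (d + 1) ∧
  (∀ p : P3, p ∣ a → p ∣ b → p ∣ c → IsUnit p) ∧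
  X 0 * a + X 1 * b + X 2 * c = 0

/-- Restriction to the affine chart `z = 1`: `p(x, y, 1)`. -/
def chartZ (p : P3) : P2 := aeval ![(X 0 : P2), X 1, 1] p

/-- The order of vanishing of `p` at the origin `(0,0)` is `n`: all homogeneous
components of degree `< n` vanish and the component of degree `n` does not. -/
def OrdIs (p : P2) (n : ℕ) : Prop :=
  (∀ k, k < n → homogeneousComponent k p = 0) ∧ homogeneousComponent n p ≠ 0

theorem lin_eval (l : Fin 3 → ℂ) (v : Fin 3 → ℂ) :
    eval v (lin l) = l 0 * v 0 + l 1 * v 1 + l 2 * v 2 := by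
  simp [lin]

theorem lin_inj {l m : Fin 3 → ℂ} {t : ℂ} (h : lin l = C t * lin m) : l = t • m := by
  have key : ∀ v : Fin 3 → ℂ, eval v (lin l) = t * eval v (lin m) := by
    intro v; rw [h]; simp
  simp only [lin_eval] at key
  funext i
  fin_cases i
  · simpa using key ![1, 0, 0]
  · simpa using key ![0, 1, 0]
  · simpa using key ![0, 0, 1]

theorem lin_ne_zero {l : Fin 3 → ℂ} (hl : l ≠ 0) : lin l ≠ 0 := by
  intro h
  apply hl
  have : lin l = C 0 * lin l := by rw [h]; simp
  rw [lin_inj this]; simp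

theorem lin_hom (l : Fin 3 → ℂ) : (lin l).IsHomogeneous 1 :=
  ((isHomogeneous_C_mul_X _ _).add (isHomogeneous_C_mul_X _ _)).add (isHomogeneous_C_mul_X _ _)

theorem lin_totalDegree {l : Fin 3 → ℂ} (hl : l ≠ 0) : (lin l).totalDegree = 1 :=
  (lin_hom l).totalDegree (lin_ne_zero hl)

theorem lin_prime {l : Fin 3 → ℂ} (hl : l ≠ 0) : Prime (lin l) := by
  rw [← irreducible_iff_prime]
  refine irreducible_of_totalDegree_eq_one (lin_totalDegree hl) ?_
  intro x hx
  by_contra hu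
  have hx0 : x = 0 := by
    by_contra h; exact hu (isUnit_iff_ne_zero.mpr h)
  apply lin_ne_zero hl
  ext i
  simpa [hx0] using hx i

theorem lin_dvd_lin {l m : Fin 3 → ℂ} (hl : l ≠ 0) (hm : m ≠ 0) (h : lin m ∣ lin l) :
    ∃ t : ℂ, l = t • m := by
  obtain ⟨k, hk⟩ := h
  have hk0 : k ≠ 0 := by
    rintro rfl; exact lin_ne_zero hl (by simpa using hk)
  have h2 := congrArg MvPolynomial.totalDegree hk
  rw [totalDegree_mul_of_isDomain (lin_ne_zero hm) hk0, lin_totalDegree hl,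
    lin_totalDegree hm] at h2
  have h3 : k.totalDegree = 0 := by omega
  rw [totalDegree_eq_zero_iff_eq_C] at h3
  refine ⟨_, lin_inj (t := coeff 0 k) ?_⟩
  rw [hk, ← h3, mul_comm]

/-- Dilation at the origin of the chart `z = 1`. -/
def theta : P3 →ₐ[ℂ] Polynomial P2 :=
  aeval ![Polynomial.C (X 0) * Polynomial.X, Polynomial.C (X 1) * Polynomial.X, 1]

def dil : P2 →ₐ[ℂ] Polynomial P2 :=
  aeval (fun i => Polynomial.C (X i) * Polynomial.X)

theorem dil_coeff (k : ℕ) (p : P2) : (dil p).coeff k = homogeneousComponent k p := by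
  induction p using MvPolynomial.induction_on' with
  | monomial u r =>
    have h1 : dil (monomial u r) = Polynomial.C (monomial u r) * Polynomial.X ^ u.degree := by
      rw [dil, aeval_monomial, Finsupp.prod_fintype _ _ (by simp)]
      rw [monomial_eq, Finsupp.prod_fintype _ _ (by simp)]
      simp only [mul_pow, Finset.prod_mul_distrib, Finsupp.degree_eq_sum, 
        Finset.prod_pow_eq_pow_sum, map_mul, map_prod, map_pow, ← mul_assoc]
      rfl
    rw [h1, Polynomial.coeff_C_mul_X_pow,
      homogeneousComponent_of_mem (n := u.degree)
        ((mem_homogeneousSubmodule _ _).mpr (isHomogeneous_monomial r rfl))]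
  | add p q hp hq => simp [map_add, hp, hq]

theorem theta_eq (p : P3) : theta p = dil (chartZ p) := by
  have : theta = dil.comp (aeval ![(X 0 : P2), X 1, 1]) := by
    apply MvPolynomial.algHom_ext
    intro i
    fin_cases i <;> simp [theta, dil]
  rw [this]; rfl

theorem theta_coeff (k : ℕ) (p : P3) :
    (theta p).coeff k = homogeneousComponent k (chartZ p) := by
  rw [theta_eq, dil_coeff]

/-- The ideal `(x, y)`. -/
def I0 : Ideal P3 := Ideal.span {X 0, X 1}

theorem theta_I0 {n : ℕ} {p : P3} (h : p ∈ I0 ^ n) : Polynomial.X ^ n ∣ theta p := by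
  rw [← Ideal.mem_span_singleton, ← Ideal.span_singleton_pow]
  have h1 : I0.map theta ≤ Ideal.span {Polynomial.X} := by
    rw [I0, Ideal.map_span, Ideal.span_le]
    rintro _ ⟨x, hx, rfl⟩
    simp only [SetLike.mem_coe, Ideal.mem_span_singleton]
    rcases hx with rfl | rfl
    · simp [theta]
    · simp [theta]
  have h2 := Ideal.mem_map_of_mem theta h
  rw [Ideal.map_pow] at h2
  exact Ideal.pow_right_mono h1 n h2

def fs (m : Fin 3 →₀ ℕ) : Fin 2 →₀ ℕ := Finsupp.equivFunOnFinite.symm ![m 0, m 1]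

theorem chartZ_monomial (m : Fin 3 →₀ ℕ) (r : ℂ) :
    chartZ (monomial m r) = monomial (fs m) r := by
  rw [chartZ, aeval_monomial, Finsupp.prod_fintype _ _ (by simp), monomial_eq,
    Finsupp.prod_fintype _ _ (by simp)]
  simp [Fin.prod_univ_succ, fs, algebraMap_eq]

theorem chartZ_coeff {e : ℕ} {p : P3} (hp : p.IsHomogeneous e) {m : Fin 3 →₀ ℕ}
    (hm : m.degree = e) : coeff (fs m) (chartZ p) = coeff m p := by
  have h : chartZ p = ∑ v ∈ p.support, monomial (fs v) (coeff v p) := by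
    conv_lhs => rw [p.as_sum]
    simp only [← chartZ_monomial]
    rw [chartZ, map_sum]
    rfl
  rw [h, coeff_sum, Finset.sum_eq_single m]
  · simp
  · intro b hb hbm
    rw [coeff_monomial, if_neg]
    intro hf
    apply hbm
    have hbd : b.degree = e := by
      by_contra hne
      exact (mem_support_iff.mp hb) (hp.coeff_eq_zero hne)
    have h0 := DFunLike.congr_fun hf 0
    have h1 := DFunLike.congr_fun hf 1
    simp [fs] at h0 h1
    simp [Finsupp.degree_eq_sum, Fin.sum_univ_three] at hm hbd
    ext i
    fin_cases i <;> simp <;> omega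
  · intro hm; simpa using hm

theorem mem_I0_pow {e n : ℕ} {p : P3} (hp : p.IsHomogeneous e)
    (h : ∀ k, k < n → homogeneousComponent k (chartZ p) = 0) : p ∈ I0 ^ n := by
  rw [p.as_sum]
  refine Ideal.sum_mem _ fun m hm => ?_
  have hme : m.degree = e := by
    by_contra hne
    exact (mem_support_iff.mp hm) (hp.coeff_eq_zero hne)
  have hn : n ≤ m 0 + m 1 := by
    by_contra hlt
    have h1 := h (m 0 + m 1) (by omega)
    have h2 := congrArg (coeff (fs m)) h1
    rw [coeff_homogeneousComponent, if_pos, chartZ_coeff hp hme] at h2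
    · exact (mem_support_iff.mp hm) (by simpa using h2)
    · simp [fs, Finsupp.degree_eq_sum]
  rw [monomial_eq, Finsupp.prod_fintype _ _ (by simp), Fin.prod_univ_three]
  apply Ideal.mul_mem_left
  apply Ideal.mul_mem_right
  apply Ideal.pow_le_pow_right hn
  rw [pow_add]
  exact Ideal.mul_mem_mul (Ideal.pow_mem_pow (Ideal.subset_span (by simp)) _)
    (Ideal.pow_mem_pow (Ideal.subset_span (by simp)) _)

theorem hom_of_mul {e f : ℕ} {p q : P3} (hp : p.IsHomogeneous e) (hp0 : p ≠ 0)
    (hpq : (p * q).IsHomogeneous (e + f)) : q.IsHomogeneous f := by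
  have h := letI := MvPolynomial.gradedAlgebra (σ := Fin 3) (R := ℂ)
    DirectSum.coe_decompose_mul_add_of_left_mem (homogeneousSubmodule (Fin 3) ℂ)
      (i := e) (j := f) (a := p) (b := q) hp
  have key : homogeneousComponent (e + f) (p * q) = p * homogeneousComponent f q := by
    rw [← decomposition.decompose'_apply, ← decomposition.decompose'_apply]
    exact h
  rw [homogeneousComponent_eq_self hpq] at key
  rw [mul_left_cancel₀ hp0 key]
  exact homogeneousComponent_isHomogeneous f q

section Core

/-- The derivation `∂x - α ∂z`. -/
def D1 (α : ℂ) : Derivation ℂ P3 P3 := pderiv 0 - (C α : P3) • pderiv 2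

def D2 (β : ℂ) : Derivation ℂ P3 P3 := pderiv 1 - (C β : P3) • pderiv 2

/-- The vector field `A (∂x - α ∂z) + B (∂y - β ∂z)`. -/
def ZZ (α β : ℂ) (A B : P3) : Derivation ℂ P3 P3 := A • D1 α + B • D2 β

theorem ZZ_apply (α β : ℂ) (A B p : P3) : ZZ α β A B p = A * D1 α p + B * D2 β p := by
  simp [ZZ]

theorem D1_apply (α : ℂ) (p : P3) : D1 α p = pderiv 0 p - C α * pderiv 2 p := by
  simp [D1]

theorem D2_apply (β : ℂ) (p : P3) : D2 β p = pderiv 1 p - C β * pderiv 2 p := by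
  simp [D2]

theorem ZZ_mul (α β : ℂ) (A B p q : P3) :
    ZZ α β A B (p * q) = p * ZZ α β A B q + q * ZZ α β A B p := by
  simp

theorem ZZ_C (α β : ℂ) (A B : P3) (t : ℂ) : ZZ α β A B (C t) = 0 := by
  simp

theorem ZZ_X0 (α β : ℂ) (A B : P3) : ZZ α β A B (X 0) = A := by
  simp [ZZ_apply, D1_apply, D2_apply, pderiv_X]

theorem ZZ_X1 (α β : ℂ) (A B : P3) : ZZ α β A B (X 1) = B := by
  simp [ZZ_apply, D1_apply, D2_apply, pderiv_X]

theorem ZZ_X2 (α β : ℂ) (A B : P3) : ZZ α β A B (X 2) = - (C α * A + C β * B) := by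
  simp [ZZ_apply, D1_apply, D2_apply, pderiv_X]; ring

/-- The extactic (inflection) polynomial. -/
def EE (α β : ℂ) (A B : P3) : P3 := A * ZZ α β A B B - B * ZZ α β A B A

theorem D1_hom {α : ℂ} {d : ℕ} {p : P3} (h : p.IsHomogeneous d) :
    (D1 α p).IsHomogeneous (d - 1) := by
  rw [D1_apply]
  exact h.pderiv.sub (h.pderiv.C_mul α)

theorem D2_hom {β : ℂ} {d : ℕ} {p : P3} (h : p.IsHomogeneous d) :
    (D2 β p).IsHomogeneous (d - 1) := by
  rw [D2_apply]
  exact h.pderiv.sub (h.pderiv.C_mul β)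

theorem ZZ_hom {α β : ℂ} {d : ℕ} {A B p : P3} (hA : A.IsHomogeneous d) (hB : B.IsHomogeneous d)
    (h : p.IsHomogeneous d) : (ZZ α β A B p).IsHomogeneous (d + (d - 1)) := by
  rw [ZZ_apply]
  exact (hA.mul (D1_hom h)).add (hB.mul (D2_hom h))

theorem EE_hom {α β : ℂ} {d : ℕ} {A B : P3} (hA : A.IsHomogeneous d) (hB : B.IsHomogeneous d) :
    (EE α β A B).IsHomogeneous (d + (d + (d - 1))) :=
  (hA.mul (ZZ_hom hA hB hB)).sub (hB.mul (ZZ_hom hA hB hA))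

theorem ZZ_mem_pow {α β : ℂ} {A B : P3} (hA : A ∈ I0) (hB : B ∈ I0) (n : ℕ) :
    ∀ p ∈ I0 ^ n, ZZ α β A B p ∈ I0 ^ n := by
  have h1 : ∀ p ∈ I0, ZZ α β A B p ∈ I0 := by
    intro p hp
    obtain ⟨u, v, rfl⟩ := Ideal.mem_span_pair.mp hp
    rw [map_add, ZZ_mul, ZZ_mul, ZZ_X0, ZZ_X1]
    have hx : (X 0 : P3) ∈ I0 := Ideal.subset_span (by simp)
    have hy : (X 1 : P3) ∈ I0 := Ideal.subset_span (by simp)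
    exact I0.add_mem (I0.add_mem (I0.mul_mem_left _ hA) (I0.mul_mem_right _ hx))
      (I0.add_mem (I0.mul_mem_left _ hB) (I0.mul_mem_right _ hy))
  induction n with
  | zero => simp
  | succ n ih =>
    intro p hp
    rw [pow_succ] at hp ⊢
    refine Submodule.mul_induction_on hp ?_ ?_
    · intro m hm k hk
      rw [ZZ_mul]
      refine Ideal.add_mem _ (Ideal.mul_mem_mul hm (h1 _ hk)) ?_
      rw [mul_comm k]
      exact Ideal.mul_mem_mul (ih _ hm) hk
    · intro x y hx hy
      rw [map_add]
      exact Ideal.add_mem _ hx hy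

theorem X_not_dvd {i j : Fin 3} (h : i ≠ j) : ¬ (X i : P3) ∣ X j := by
  rw [X_dvd_X]
  exact h

theorem EE_mem {α β : ℂ} {A B : P3} (hA : A ∈ I0) (hB : B ∈ I0) {n : ℕ} 
    (h : X 1 * A - X 0 * B ∈ I0 ^ (n + 1)) : EE α β A B ∈ I0 ^ (n + 1) := by
  obtain ⟨u, hu, w, hw, huw⟩ : ∃ u ∈ I0 ^ n, ∃ w ∈ I0 ^ n,
      X 1 * A - X 0 * B = u * X 1 + w * X 0 := by
    have h' := h
    rw [pow_succ] at h'
    refine Submodule.mul_induction_on h' ?_ ?_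
    · intro m hm k hk
      obtain ⟨s, t, rfl⟩ := Ideal.mem_span_pair.mp hk
      exact ⟨m * t, Ideal.mul_mem_right _ _ hm, m * s, Ideal.mul_mem_right _ _ hm, by ring⟩
    · rintro x y ⟨u, hu, w, hw, e⟩ ⟨u', hu', w', hw', e'⟩
      exact ⟨u + u', Ideal.add_mem _ hu hu', w + w', Ideal.add_mem _ hw hw', by rw [e, e']; ring⟩
  have h2 : X 1 * (A - u) = X 0 * (B + w) := by linear_combination huw
  have h3 : (X 0 : P3) ∣ A - u := by
    have : (X 0 : P3) ∣ X 1 * (A - u) := ⟨_, h2⟩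
    exact ((X_prime.dvd_mul).mp this).resolve_left (X_not_dvd (by decide))
  obtain ⟨P, hP⟩ := h3
  have h4 : B + w = X 1 * P := by
    apply mul_left_cancel₀ (X_ne_zero (R := ℂ) (0 : Fin 3))
    rw [← h2, hP]; ring
  have eA : A = X 0 * P + u := by rw [← hP]; ring
  have eB : B = X 1 * P - w := by rw [← h4]; ring
  have zA : ZZ α β A B A = X 0 * ZZ α β A B P + P * A + ZZ α β A B u := by
    conv_lhs => rw [show ZZ α β A B A = ZZ α β A B (X 0 * P + u) by rw [← eA]]
    rw [map_add, ZZ_mul, ZZ_X0]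
  have zB : ZZ α β A B B = X 1 * ZZ α β A B P + P * B - ZZ α β A B w := by
    conv_lhs => rw [show ZZ α β A B B = ZZ α β A B (X 1 * P - w) by rw [← eB]]
    rw [map_sub, ZZ_mul, ZZ_X1]
  have e : EE α β A B = ZZ α β A B P * (X 1 * A - X 0 * B) - ZZ α β A B w * A
      - ZZ α β A B u * B := by
    rw [EE, zA, zB]; ring
  rw [e]
  refine Ideal.sub_mem _ (Ideal.sub_mem _ (Ideal.mul_mem_left _ _ h) ?_) ?_
  · rw [pow_succ]; exact Ideal.mul_mem_mul (ZZ_mem_pow hA hB n _ hw) hA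
  · rw [pow_succ]; exact Ideal.mul_mem_mul (ZZ_mem_pow hA hB n _ hu) hB

theorem not_dvd_both {m : P3} (hm : Prime m) (h0 : m ∣ X 0) (h1 : m ∣ X 1) : False := by
  have h2 : (X 0 : P3) ∣ m :=
    (hm.irreducible.associated_of_dvd X_prime.irreducible h0).symm.dvd
  exact X_not_dvd (i := 0) (j := 1) (by decide) (h2.trans h1)

/-- Every other invariant line divides the extactic polynomial. -/
theorem dvd_EE {α β : ℂ} {a b c A B : P3} {m : Fin 3 → ℂ}
    (ea : a = (C α * X 0 + C β * X 1 + X 2) * B + C α * c)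
    (eb : b = - (C α * X 0 + C β * X 1 + X 2) * A + C β * c)
    (ec : c = X 1 * A - X 0 * B)
    (hm : InvLine a b c m) (hne : m 0 ≠ m 2 * α ∨ m 1 ≠ m 2 * β) :
    lin m ∣ EE α β A B := by
  obtain ⟨hm0, -, h1, h2⟩ := hm
  have hp := lin_prime hm0
  set N : P3 := C (m 0 - m 2 * α) * A + C (m 1 - m 2 * β) * B with hN
  have hZ : ZZ α β A B (lin m) = N := by
    rw [lin]
    simp only [map_add, ZZ_mul, ZZ_X0, ZZ_X1, ZZ_X2, ZZ_C, hN, map_sub, map_mul]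
    ring
  have hy : lin m ∣ X 1 * N := by
    have e : X 1 * N = lin m * B - (C (m 2) * a - C (m 0) * c) := by
      rw [ea, ec, hN, lin]; simp only [map_sub, map_mul]; ring
    rw [e]; exact dvd_sub (dvd_mul_right _ _) h1
  have hx : lin m ∣ X 0 * N := by
    have e : X 0 * N = lin m * A + (C (m 2) * b - C (m 1) * c) := by
      rw [eb, ec, hN, lin]; simp only [map_sub, map_mul]; ring
    rw [e]; exact dvd_add (dvd_mul_right _ _) h2
  have hd : lin m ∣ N := by
    rcases hp.dvd_or_dvd hx with h | h
    · rcases hp.dvd_or_dvd hy with h' | h'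
      · exact (not_dvd_both hp h h').elim
      · exact h'
    · exact h
  have hZN : lin m ∣ ZZ α β A B N := by
    obtain ⟨k, hk⟩ := hd
    rw [hk, ZZ_mul, hZ, hk]
    exact dvd_add (dvd_mul_right _ _) ((dvd_mul_right _ _).mul_left _)
  have eZN : ZZ α β A B N = C (m 0 - m 2 * α) * ZZ α β A B A
      + C (m 1 - m 2 * β) * ZZ α β A B B := by
    rw [hN, map_add, ZZ_mul, ZZ_mul, ZZ_C, ZZ_C]; ring
  rcases hne with h | h
  · have e : C (m 0 - m 2 * α) * EE α β A B = N * ZZ α β A B B - B * ZZ α β A B N := by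
      rw [eZN, hN, EE]; ring
    have hu : IsUnit (C (m 0 - m 2 * α) : P3) :=
      (isUnit_iff_ne_zero.mpr (sub_ne_zero.mpr h)).map C
    rw [← hu.dvd_mul_left, e]
    exact dvd_sub (hd.mul_right _) (hZN.mul_left _)
  · have e : C (m 1 - m 2 * β) * EE α β A B = A * ZZ α β A B N - N * ZZ α β A B A := by
      rw [eZN, hN, EE]; ring
    have hu : IsUnit (C (m 1 - m 2 * β) : P3) :=
      (isUnit_iff_ne_zero.mpr (sub_ne_zero.mpr h)).map C
    rw [← hu.dvd_mul_left, e]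
    exact dvd_sub (hZN.mul_left _) (hd.mul_right _)

theorem eq_zero_of_dvd_lower {d : ℕ} (hd : 1 ≤ d) {p q : P3} (hp : p.IsHomogeneous d)
    (hp0 : p ≠ 0) (hq : q.IsHomogeneous (d - 1)) (h : p ∣ q) : q = 0 := by
  by_contra hq0
  have := totalDegree_le_of_dvd_of_isDomain h hq0
  rw [hp.totalDegree hp0, hq.totalDegree hq0] at this
  omega

theorem not_isUnit_of_hom {d : ℕ} (hd : 1 ≤ d) {p : P3} (hp : p.IsHomogeneous d) :
    ¬ IsUnit p := by
  intro h
  have h1 := (MvPolynomial.isUnit_iff_totalDegree_of_isReduced.mp h).2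
  rw [hp.totalDegree h.ne_zero] at h1
  omega

/-- The extactic polynomial does not vanish when `d ≥ 1`. -/
theorem EE_ne_zero {α β : ℂ} {d : ℕ} (hd : 1 ≤ d) {a b c A B : P3}
    (hA : A.IsHomogeneous d) (hB : B.IsHomogeneous d)
    (ea : a = (C α * X 0 + C β * X 1 + X 2) * B + C α * c)
    (eb : b = - (C α * X 0 + C β * X 1 + X 2) * A + C β * c)
    (ec : c = X 1 * A - X 0 * B)
    (hu : ∀ p : P3, p ∣ a → p ∣ b → p ∣ c → IsUnit p)
    (hl : ¬ IsUnit (C α * X 0 + C β * X 1 + X 2 : P3)) : EE α β A B ≠ 0 := by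
  intro hE
  have hrel : IsRelPrime A B := by
    intro p hpA hpB
    have hc : p ∣ c := by rw [ec]; exact dvd_sub (hpA.mul_left _) (hpB.mul_left _)
    refine hu p ?_ ?_ hc
    · rw [ea]; exact dvd_add (hpB.mul_left _) (hc.mul_left _)
    · rw [eb]; exact dvd_add (hpA.mul_left _) (hc.mul_left _)
  have hA0 : A ≠ 0 := by
    rintro rfl
    exact not_isUnit_of_hom hd hB (hrel (dvd_zero _) dvd_rfl)
  have hB0 : B ≠ 0 := by
    rintro rfl
    exact not_isUnit_of_hom hd hA (hrel dvd_rfl (dvd_zero _))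
  have hE' : A * (A * D1 α B + B * D2 β B) - B * (A * D1 α A + B * D2 β A) = 0 := by
    rw [← ZZ_apply, ← ZZ_apply]; exact hE
  have h1 : D2 β A = 0 := by
    refine eq_zero_of_dvd_lower hd hA hA0 (D2_hom hA) ?_
    have : A ∣ B * (B * D2 β A) :=
      ⟨A * D1 α B + B * D2 β B - B * D1 α A, by linear_combination -hE'⟩
    exact hrel.dvd_of_dvd_mul_left (hrel.dvd_of_dvd_mul_left this)
  have h2 : D1 α B = 0 := by
    refine eq_zero_of_dvd_lower hd hB hB0 (D1_hom hB) ?_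
    have : B ∣ A * (A * D1 α B) :=
      ⟨A * D1 α A + B * D2 β A - A * D2 β B, by linear_combination hE'⟩
    exact hrel.symm.dvd_of_dvd_mul_left (hrel.symm.dvd_of_dvd_mul_left this)
  have h3 : D1 α A = D2 β B := by
    rw [h1, h2] at hE'
    apply mul_left_cancel₀ (mul_ne_zero hA0 hB0)
    linear_combination -hE'
  have uA := hA.sum_X_mul_pderiv
  have uB := hB.sum_X_mul_pderiv
  rw [Fin.sum_univ_three, nsmul_eq_mul] at uA uB
  rw [D1_apply] at h2
  rw [D2_apply] at h1
  rw [D1_apply, D2_apply] at h3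
  have hd0 : IsUnit ((d : ℕ) : P3) := by
    have : ((d : ℕ) : P3) = C (d : ℂ) := by simp
    rw [this]
    exact (isUnit_iff_ne_zero.mpr (by exact_mod_cast (by omega : d ≠ 0))).map C
  have hc : (C α * X 0 + C β * X 1 + X 2 : P3) ∣ c := by
    rw [← hd0.dvd_mul_left]
    refine ⟨X 1 * pderiv 2 A - X 0 * pderiv 2 B, ?_⟩
    rw [ec]
    linear_combination -X 1 * uA + X 0 * uB + X 1 * X 1 * h1 - X 0 * X 0 * h2 + X 0 * X 1 * h3
  apply hl
  refine hu _ ?_ ?_ hc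
  · rw [ea]; exact dvd_add (dvd_mul_right _ _) (hc.mul_left _)
  · rw [eb]; exact dvd_add ((dvd_neg.mpr dvd_rfl).mul_right _) (hc.mul_left _)

end Core

theorem mem_I0_of_eval {e : ℕ} {p : P3} (hp : p.IsHomogeneous e)
    (h : eval ![0, 0, 1] p = 0) : p ∈ I0 := by
  rw [← pow_one I0]
  refine mem_I0_pow hp ?_
  intro k hk
  have hk0 : k = 0 := by omega
  subst hk0
  have h1 : ∀ q : P3, coeff 0 (chartZ q) = eval ![0, 0, 1] q := by
    intro q
    have h2 : ((constantCoeff : P2 →+* ℂ).comp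
        ((aeval ![(X 0 : P2), X 1, 1] : P3 →ₐ[ℂ] P2) : P3 →+* P2)) = eval ![0, 0, 1] := by
      apply MvPolynomial.ringHom_ext
      · intro r; simp
      · intro i; fin_cases i <;> simp
    exact RingHom.congr_fun h2 q
  rw [homogeneousComponent_zero, h1, h, map_zero]

theorem c_ne_zero {d : ℕ} (hd : 1 ≤ d) {a b c : P3} (hfol : IsFoliation d a b c) : c ≠ 0 := by
  obtain ⟨ha, hb, hc, hu, he⟩ := hfol
  rintro rfl
  have h1 : X 0 * a = X 1 * (-b) := by linear_combination he
  have h2 : (X 1 : P3) ∣ a := by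
    have : (X 1 : P3) ∣ X 0 * a := ⟨_, h1⟩
    exact ((X_prime.dvd_mul).mp this).resolve_left (X_not_dvd (by decide))
  obtain ⟨g, rfl⟩ := h2
  have h3 : b = - (X 0 * g) := by
    apply mul_left_cancel₀ (X_ne_zero (R := ℂ) (1 : Fin 3))
    linear_combination h1
  have hg : IsUnit g := by
    refine hu g (dvd_mul_left _ _) ?_ (dvd_zero _)
    rw [h3]; exact dvd_neg.mpr (dvd_mul_left _ _)
  have hgh : g.IsHomogeneous d := by
    refine hom_of_mul (isHomogeneous_X ℂ (1 : Fin 3)) (X_ne_zero _) ?_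
    rwa [add_comm 1 d]
  exact not_isUnit_of_hom hd hgh hg

theorem theta_lin_zero {l : Fin 3 → ℂ} (h : l 2 = 0) :
    theta (lin l) = Polynomial.X * Polynomial.C (C (l 0) * X 0 + C (l 1) * X 1) := by
  have hC : ∀ t : ℂ, theta (C t) = Polynomial.C (C t) := fun t => by
    rw [theta, ← algebraMap_eq, AlgHom.commutes]; rfl
  rw [lin, h]
  simp only [map_add, map_mul, hC]
  simp [theta]; ring

theorem theta_lin_coeff (l : Fin 3 → ℂ) : (theta (lin l)).coeff 0 = C (l 2) := by
  have hC : ∀ t : ℂ, theta (C t) = Polynomial.C (C t) := fun t => by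
    rw [theta, ← algebraMap_eq, AlgHom.commutes]; rfl
  rw [lin]
  simp only [map_add, map_mul, hC]
  simp [theta]

theorem pair_ne_zero {l : Fin 3 → ℂ} (hl : l ≠ 0) (h : l 2 = 0) :
    (C (l 0) * X 0 + C (l 1) * X 1 : P2) ≠ 0 := by
  intro h0
  apply hl
  have e0 := congrArg (eval ![1, 0]) h0
  have e1 := congrArg (eval ![0, 1]) h0
  simp at e0 e1
  funext i
  fin_cases i
  · simpa using e0
  · simpa using e1
  · simpa using h

/-- For a reduced convex foliation `F` of degree `d ≥ 1` with singular point
`s = [0:0:1]`, the number of the `3d` invariant lines of `F` through `s` equals the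
vanishing order of `c(x,y,1)` at `(0,0)`, and this order equals `τ(F,s) + 1`, encoded by
`ord_{(0,0)}(x·a(x,y,1) + y·b(x,y,1))`. -/
theorem reduced_convex_lines_through_singularity
    (d : ℕ) (hd : 1 ≤ d) (a b c : P3) (hfol : IsFoliation d a b c)
    (L : Fin (3 * d) → (Fin 3 → ℂ))
    (hinv : ∀ i, InvLine a b c (L i))
    (hnp : ∀ i j, i ≠ j → ∀ t : ℂ, L i ≠ t • L j)
    (ha : eval ![0, 0, 1] a = 0) (hb : eval ![0, 0, 1] b = 0) :
    ∃ n : ℕ,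
      {i : Fin (3 * d) | L i 2 = 0}.ncard = n ∧
      OrdIs (chartZ c) n ∧
      OrdIs (X 0 * chartZ a + X 1 * chartZ b) n := by
  classical
  have hfol' := hfol
  obtain ⟨hah, hbh, hch, hu, he⟩ := hfol'
  have hL0 : ∀ i, L i ≠ 0 := fun i => (hinv i).1
  have hrel : ∀ i j, i ≠ j → IsRelPrime (lin (L i)) (lin (L j)) := by
    intro i j hij
    rw [(lin_prime (hL0 i)).irreducible.isRelPrime_iff_not_dvd]
    intro h
    obtain ⟨t, ht⟩ := lin_dvd_lin (hL0 j) (hL0 i) h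
    exact hnp j i hij.symm t ht
  have hprod_hom : ∀ T : Finset (Fin (3 * d)), (∏ i ∈ T, lin (L i)).IsHomogeneous T.card := by
    intro T
    have := IsHomogeneous.prod T (fun i => lin (L i)) (fun _ => 1) (fun i _ => lin_hom _)
    simpa using this
  have hprod_ne : ∀ T : Finset (Fin (3 * d)), (∏ i ∈ T, lin (L i)) ≠ 0 := by
    intro T
    exact Finset.prod_ne_zero_iff.mpr fun i _ => lin_ne_zero (hL0 i)
  set S : Finset (Fin (3 * d)) := Finset.univ.filter (fun i => L i 2 = 0) with hS
  have hSc : ∏ i ∈ S, lin (L i) ∣ c := by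
    refine Finset.prod_dvd_of_isRelPrime (fun i _ j _ hij => hrel i j hij) ?_
    intro i hi
    have hi2 : L i 2 = 0 := by simpa [hS] using hi
    obtain ⟨hi0, -, h1, h2⟩ := hinv i
    have hx : L i 0 ≠ 0 ∨ L i 1 ≠ 0 := by
      by_contra hcon
      push Not at hcon
      apply hi0
      funext k
      fin_cases k
      · exact hcon.1
      · exact hcon.2
      · exact hi2
    rw [hi2] at h1 h2
    simp only [map_zero, zero_mul, zero_sub, dvd_neg] at h1 h2
    rcases hx with hx | hx
    · exact (((isUnit_iff_ne_zero.mpr hx).map (C : ℂ →+* P3)).dvd_mul_left).mp h1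
    · exact (((isUnit_iff_ne_zero.mpr hx).map (C : ℂ →+* P3)).dvd_mul_left).mp h2
  have hc0 := c_ne_zero hd hfol
  have hSd : S.card ≤ d + 1 := by
    have := totalDegree_le_of_dvd_of_isDomain hSc hc0
    rwa [(hprod_hom S).totalDegree (hprod_ne S), hch.totalDegree hc0] at this
  obtain ⟨i0, hi0⟩ : ∃ i0, L i0 2 ≠ 0 := by
    by_contra hcon
    push Not at hcon
    have : S = Finset.univ := by rw [hS]; ext i; simp [hcon i]
    rw [this] at hSd
    simp at hSd
    omega
  -- the affine normal form with respect to the invariant line `L i0`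
  set γ := L i0 2 with hγ
  set α := L i0 0 / γ with hα
  set β := L i0 1 / γ with hβ
  have hα' : L i0 0 = γ * α := by rw [hα]; field_simp
  have hβ' : L i0 1 = γ * β := by rw [hβ]; field_simp
  set ell : P3 := C α * X 0 + C β * X 1 + X 2 with hell
  have hlin : lin (L i0) = C γ * ell := by
    rw [lin, hα', hβ', hell]; simp only [map_mul]; ring
  have hγu : IsUnit (C γ : P3) := (isUnit_iff_ne_zero.mpr hi0).map C
  obtain ⟨B, hB⟩ : ell ∣ a - C α * c := by
    have h := (hinv i0).2.2.1
    rw [hlin, hα', show C (L i0 2) * a - C (γ * α) * c = C γ * (a - C α * c) by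
      rw [map_mul]; ring, hγu.mul_left_dvd, hγu.dvd_mul_left] at h
    exact h
  obtain ⟨A', hA'⟩ : ell ∣ b - C β * c := by
    have h := (hinv i0).2.2.2
    rw [hlin, hβ', show C (L i0 2) * b - C (γ * β) * c = C γ * (b - C β * c) by
      rw [map_mul]; ring, hγu.mul_left_dvd, hγu.dvd_mul_left] at h
    exact h
  obtain ⟨A, rfl⟩ : ∃ A, A' = -A := ⟨-A', by ring⟩
  have hell0 : ell ≠ 0 := by
    intro h; apply lin_ne_zero (hL0 i0); rw [hlin, h, mul_zero]
  have hellh : ell.IsHomogeneous 1 :=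
    ((isHomogeneous_C_mul_X _ _).add (isHomogeneous_C_mul_X _ _)).add (isHomogeneous_X _ _)
  have hellu : ¬ IsUnit ell := not_isUnit_of_hom le_rfl hellh
  have hBh : B.IsHomogeneous d := by
    refine hom_of_mul hellh hell0 ?_
    rw [← hB, add_comm]
    exact hah.sub (hch.C_mul _)
  have hAh : A.IsHomogeneous d := by
    have : (-A).IsHomogeneous d := by
      refine hom_of_mul hellh hell0 ?_
      rw [← hA', add_comm]
      exact hbh.sub (hch.C_mul _)
    simpa using this.neg
  have ea : a = ell * B + C α * c := by linear_combination hB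
  have eb : b = - ell * A + C β * c := by linear_combination hA'
  have ec : c = X 1 * A - X 0 * B := by
    apply mul_left_cancel₀ hell0
    linear_combination he - X 0 * hB - X 1 * hA' + c * hell
  have hEh := EE_hom (α := α) (β := β) hAh hBh
  have hE0 := EE_ne_zero hd hAh hBh ea eb ec hu hellu
  have hEd : ∏ i ∈ Finset.univ.erase i0, lin (L i) ∣ EE α β A B := by
    refine Finset.prod_dvd_of_isRelPrime (fun i _ j _ hij => hrel i j hij) ?_
    intro i hi
    refine dvd_EE ea eb ec (hinv i) ?_
    by_contra hcon
    push Not at hcon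
    apply hnp i i0 (Finset.ne_of_mem_erase hi) (L i 2 / γ)
    funext k
    fin_cases k
    · simp [hα', hcon.1]; field_simp
    · simp [hβ', hcon.2]; field_simp
    · simp [← hγ]; field_simp
  obtain ⟨κ, hκ⟩ := hEd
  have hκ0 : κ ≠ 0 := by
    rintro rfl; exact hE0 (by simpa using hκ)
  have hκd : κ.totalDegree = 0 := by
    have h := congrArg MvPolynomial.totalDegree hκ
    rw [totalDegree_mul_of_isDomain (hprod_ne _) hκ0, (hprod_hom _).totalDegree (hprod_ne _),
      hEh.totalDegree hE0, Finset.card_erase_of_mem (Finset.mem_univ _)] at h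
    simp at h
    omega
  rw [totalDegree_eq_zero_iff_eq_C] at hκd
  set t := coeff 0 κ with ht
  have ht0 : t ≠ 0 := by
    intro h; rw [h, map_zero] at hκd; exact hκ0 hκd
  have hfull : EE α β A B * lin (L i0)
      = C t * ((∏ i ∈ S, lin (L i)) * ∏ i ∈ Sᶜ, lin (L i)) := by
    rw [Finset.prod_mul_prod_compl, ← Finset.prod_erase_mul _ _ (Finset.mem_univ i0), hκ, hκd]
    ring
  have hthS : theta (∏ i ∈ S, lin (L i)) = Polynomial.X ^ S.card *
      Polynomial.C (∏ i ∈ S, (C (L i 0) * X 0 + C (L i 1) * X 1 : P2)) := by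
    rw [map_prod, Finset.prod_congr rfl (fun i hi => theta_lin_zero (l := L i)
      (by simpa [hS] using hi)), Finset.prod_mul_distrib, Finset.prod_const, map_prod]
  have hAm : A ∈ I0 ∧ B ∈ I0 := by
    have hcs : eval ![0, 0, 1] c = 0 := by
      have := congrArg (eval ![0, 0, 1]) he
      simpa [ha, hb] using this
    have hls : eval ![0, 0, 1] ell = 1 := by simp [hell]
    constructor
    · refine mem_I0_of_eval hAh ?_
      have := congrArg (eval ![0, 0, 1]) eb
      rw [map_add, map_mul, map_mul, map_neg, hls, hcs, hb] at this
      simpa using this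
    · refine mem_I0_of_eval hBh ?_
      have := congrArg (eval ![0, 0, 1]) ea
      rw [map_add, map_mul, map_mul, hls, hcs, ha] at this
      simpa using this.symm
  have hord : OrdIs (chartZ c) S.card := by
    constructor
    · intro k hk
      rw [← theta_coeff]
      have h1 : Polynomial.X ^ S.card ∣ theta c := by
        refine Dvd.dvd.trans ?_ (map_dvd theta hSc)
        rw [hthS]
        exact dvd_mul_right _ _
      exact Polynomial.X_pow_dvd_iff.mp h1 k hk
    · intro hzero
      have hlow : ∀ k, k < S.card + 1 → homogeneousComponent k (chartZ c) = 0 := by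
        intro k hk
        rcases Nat.lt_succ_iff_lt_or_eq.mp hk with h | h
        · rw [← theta_coeff]
          have h1 : Polynomial.X ^ S.card ∣ theta c := by
            refine Dvd.dvd.trans ?_ (map_dvd theta hSc)
            rw [hthS]
            exact dvd_mul_right _ _
          exact Polynomial.X_pow_dvd_iff.mp h1 k h
        · rw [h]; exact hzero
      have hcI := mem_I0_pow hch hlow
      rw [ec] at hcI
      have hEI := EE_mem (α := α) (β := β) hAm.1 hAm.2 hcI
      have hdv : Polynomial.X ^ (S.card + 1) ∣ theta (EE α β A B * lin (L i0)) := by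
        rw [map_mul]; exact (theta_I0 hEI).mul_right _
      rw [hfull, map_mul, map_mul, hthS, show ∀ p q r s : Polynomial P2,
        p * (q * r * s) = q * (p * r * s) by intros; ring, pow_succ] at hdv
      have hdv2 := (mul_dvd_mul_iff_left (pow_ne_zero _ Polynomial.X_ne_zero)).mp hdv
      rw [Polynomial.X_dvd_iff, Polynomial.mul_coeff_zero, Polynomial.mul_coeff_zero,
        Polynomial.coeff_C_zero, map_prod, Polynomial.coeff_zero_prod] at hdv2
      have hthC : theta (C t) = Polynomial.C (C t) := by
        rw [theta, ← algebraMap_eq, AlgHom.commutes]; rfl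
      rw [hthC, Polynomial.coeff_C_zero] at hdv2
      revert hdv2
      refine mul_ne_zero (mul_ne_zero ?_ ?_) ?_
      · simpa using ht0
      · refine Finset.prod_ne_zero_iff.mpr fun i hi => pair_ne_zero (hL0 i) ?_
        simpa [hS] using hi
      · refine Finset.prod_ne_zero_iff.mpr fun i hi => ?_
        rw [theta_lin_coeff]
        simpa [hS] using hi
  refine ⟨S.card, ?_, hord, ?_⟩
  · rw [← Set.ncard_coe_finset]
    congr 1
    ext i; simp [hS]
  · have e : X 0 * chartZ a + X 1 * chartZ b = - chartZ c := by
      have h := congrArg chartZ he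
      have e2 : chartZ (X 0 * a + X 1 * b + X 2 * c)
          = X 0 * chartZ a + X 1 * chartZ b + chartZ c := by
        simp only [chartZ, map_add, map_mul, aeval_X]
        simp
      have e3 : chartZ 0 = 0 := by simp [chartZ]
      rw [e2, e3] at h
      linear_combination h
    rw [e]
    constructor
    · intro k hk; rw [map_neg, hord.1 k hk, neg_zero]
    · rw [map_neg]; exact neg_ne_zero.mpr hord.2
end
end

section
/- Every foliation of degree d ≥ 1 on ℙ²(ℂ) possesses at least one non-radial singularity. Precisely: let ω = a dx + b dy + c dz define a foliation of degree d ≥ 1 on ℙ²(ℂ). Then there exists M ∈ GL₃(ℂ) such that the pullback M*ω = a′dx + b′dy + c′dz satisfies a′(0,0,1) = b′(0,0,1) = 0 (so [0:0:1] is a singular point), and it is NOT the case that ∂a′/∂x(0,0,1) = 0, ∂b′/∂y(0,0,1) = 0 and ∂a′/∂y(0,0,1) = −∂b′/∂x(0,0,1) ≠ 0. -/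
open MvPolynomial

noncomputable section

/-- Composition of a polynomial with the linear map of `ℂ³` given by the matrix `M`. -/
def compM (M : Matrix (Fin 3) (Fin 3) ℂ) (p : P3) : P3 :=
  aeval (fun i => ∑ j, C (M i j) * X j) p

/-- The coefficients of the pullback `M*ω`, i.e. `Mᵀ·(a∘M, b∘M, c∘M)`. -/
def pullbackM (M : Matrix (Fin 3) (Fin 3) ℂ) (a b c : P3) : Fin 3 → P3 :=
  fun i => C (M 0 i) * compM M a + C (M 1 i) * compM M b + C (M 2 i) * compM M c

lemma primeX (i : Fin 3) : Prime (X i : P3) := X_prime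

lemma kosz_last (N : ℕ) (p q r : P3)
    (h : X 0 ^ N * p + X 1 ^ N * q + X 2 ^ N * r = 0) :
    ∃ s t : P3, r = X 0 ^ N * s + X 1 ^ N * t := by
  classical
  let S : Set (Fin 3 →₀ ℕ) := {Finsupp.single 0 N, Finsupp.single 1 N}
  have hS : Ideal.span ((fun s => monomial s (1 : ℂ)) '' S)
      = Ideal.span {(X 0 ^ N : P3), X 1 ^ N} := by
    simp only [S, Set.image_pair, X_pow_eq_monomial]
  have h1 : (X 2 ^ N * r : P3) ∈ Ideal.span ((fun s => monomial s (1 : ℂ)) '' S) := by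
    rw [hS, Ideal.mem_span_pair]
    exact ⟨-p, -q, by linear_combination -h⟩
  have h2 : r ∈ Ideal.span ((fun s => monomial s (1 : ℂ)) '' S) := by
    rw [mem_ideal_span_monomial_image] at h1 ⊢
    intro e he
    have := h1 (Finsupp.single 2 N + e) (by
      rw [mem_support_iff] at he ⊢
      rw [X_pow_eq_monomial, coeff_monomial_mul, one_mul]
      exact he)
    obtain ⟨s, hs, hle⟩ := this
    refine ⟨s, hs, ?_⟩
    simp only [S, Set.mem_insert_iff, Set.mem_singleton_iff] at hs
    rcases hs with rfl | rfl
    · have := hle 0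
      rw [Finsupp.single_le_iff]
      simpa using this
    · have := hle 1
      rw [Finsupp.single_le_iff]
      simpa using this
  rw [hS, Ideal.mem_span_pair] at h2
  obtain ⟨s, t, hst⟩ := h2
  exact ⟨s, t, by rw [← hst]; ring⟩

lemma X_pow_dvd (N : ℕ) (i j : Fin 3) (hij : i ≠ j) (f : P3) (h : (X i : P3) ^ N ∣ X j ^ N * f) :
    (X i : P3) ^ N ∣ f := by
  refine Prime.pow_dvd_of_dvd_mul_left (primeX i) N ?_ h
  intro h'
  have := (primeX i).dvd_of_dvd_pow h'
  rw [X_dvd_X] at this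
  simp_all

lemma kosz (p q r : P3) (h : X 0 * p + X 1 * q + X 2 * r = 0) :
    ∃ m0 m1 m2 : P3, p = m1 * X 2 - m2 * X 1 ∧ q = m2 * X 0 - m0 * X 2 ∧
      r = m0 * X 1 - m1 * X 0 := by
  obtain ⟨s, t, rfl⟩ := kosz_last 1 p q r (by simpa using h)
  simp only [pow_one] at h ⊢
  have h0 : (X 0 : P3) ^ 1 ∣ X 1 ^ 1 * (q + X 2 * t) :=
    ⟨-(p + X 2 * s), by linear_combination h⟩
  obtain ⟨k, hk⟩ := X_pow_dvd 1 0 1 (by decide) _ h0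
  refine ⟨t, -s, k, ?_, by linear_combination hk, by ring⟩
  have hx : (X 0 : P3) ≠ 0 := X_ne_zero 0
  apply mul_left_cancel₀ hx
  linear_combination h - X 1 * hk

lemma parallel (a b c w0 w1 w2 : P3) (hc : ∀ p : P3, p ∣ a → p ∣ b → p ∣ c → IsUnit p)
    (h01 : w0 * b = w1 * a) (h02 : w0 * c = w2 * a) (h12 : w1 * c = w2 * b) :
    ∃ β, w0 = β * a ∧ w1 = β * b ∧ w2 = β * c := by
  classical

  let _ : GCDMonoid P3 := UniqueFactorizationMonoid.toGCDMonoid P3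
  have key : ∀ f w : P3, f ∣ w * a → f ∣ w * b → f ∣ w * c → f ∣ w := by
    intro f w ha hb hc'
    have hu : IsUnit (gcd a (gcd b c)) := hc _ (gcd_dvd_left _ _)
      ((gcd_dvd_right _ _).trans (gcd_dvd_left _ _)) ((gcd_dvd_right _ _).trans (gcd_dvd_right _ _))
    have h1 : f ∣ w * gcd b c := (dvd_gcd hb hc').trans (gcd_mul_left' w b c).dvd
    have h2 : f ∣ w * gcd a (gcd b c) := (dvd_gcd ha h1).trans (gcd_mul_left' w _ _).dvd
    exact (hu.dvd_mul_right).1 h2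
  by_cases ha : a = 0
  · by_cases hb : b = 0
    · by_cases hcc : c = 0
      · exact absurd (hc (X 0) (by simp [ha]) (by simp [hb]) (by simp [hcc]))
          (primeX 0).not_isUnit
      · obtain ⟨β, hβ⟩ := key c w2 ⟨w0, by linear_combination -h02⟩
          ⟨w1, by linear_combination -h12⟩ ⟨w2, by ring⟩
        refine ⟨β, ?_, ?_, by rw [hβ]; ring⟩ <;> apply mul_right_cancel₀ hcc
        · linear_combination h02 + a * hβ
        · linear_combination h12 + b * hβ
    · obtain ⟨β, hβ⟩ := key b w1 ⟨w0, by linear_combination -h01⟩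
          ⟨w1, by ring⟩ ⟨w2, by linear_combination h12⟩
      refine ⟨β, ?_, by rw [hβ]; ring, ?_⟩ <;> apply mul_right_cancel₀ hb
      · linear_combination h01 + a * hβ
      · linear_combination -h12 + c * hβ
  · obtain ⟨β, hβ⟩ := key a w0 ⟨w0, by ring⟩
          ⟨w1, by linear_combination h01⟩ ⟨w2, by linear_combination h02⟩
    refine ⟨β, by rw [hβ]; ring, ?_, ?_⟩ <;> apply mul_right_cancel₀ ha
    · linear_combination -h01 + b * hβ
    · linear_combination -h02 + c * hβ

/-- A syzygy crossed with the radial field is a multiple of ω. -/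
lemma syz (a b c t0 t1 t2 : P3) (hc : ∀ p : P3, p ∣ a → p ∣ b → p ∣ c → IsUnit p)
    (hE : X 0 * a + X 1 * b + X 2 * c = 0) (ht : t0 * a + t1 * b + t2 * c = 0) :
    ∃ β, t1 * X 2 - t2 * X 1 = β * a ∧ t2 * X 0 - t0 * X 2 = β * b ∧
      t0 * X 1 - t1 * X 0 = β * c := by
  apply parallel a b c _ _ _ hc
  · linear_combination X 2 * ht - t2 * hE
  · linear_combination -X 1 * ht + t1 * hE
  · linear_combination X 0 * ht - t0 * hE

/-- The ideal of a foliation is saturated. -/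
lemma saturated (a b c g : P3) (hc : ∀ p : P3, p ∣ a → p ∣ b → p ∣ c → IsUnit p)
    (hE : X 0 * a + X 1 * b + X 2 * c = 0) (N : ℕ)
    (hg : ∀ i : Fin 3, ∃ u0 u1 u2 : P3, X i ^ N * g = u0 * a + u1 * b + u2 * c) :
    ∃ u0 u1 u2 : P3, g = u0 * a + u1 * b + u2 * c := by
  obtain ⟨u0, u1, u2, hu⟩ := hg 0
  obtain ⟨v0, v1, v2, hv⟩ := hg 1
  obtain ⟨w0, w1, w2, hw⟩ := hg 2
  have hne : a ≠ 0 ∨ b ≠ 0 ∨ c ≠ 0 := by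
    by_contra! h
    exact (primeX 0).not_isUnit
      (hc (X 0) (by simp [h.1]) (by simp [h.2.1]) (by simp [h.2.2]))
  obtain ⟨β, b0, b1, b2⟩ := syz a b c (X 1 ^ N * u0 - X 0 ^ N * v0) (X 1 ^ N * u1 - X 0 ^ N * v1)
    (X 1 ^ N * u2 - X 0 ^ N * v2) hc hE (by linear_combination X 0 ^ N * hv - X 1 ^ N * hu)
  obtain ⟨γ, c0, c1, c2⟩ := syz a b c (X 2 ^ N * v0 - X 1 ^ N * w0) (X 2 ^ N * v1 - X 1 ^ N * w1)
    (X 2 ^ N * v2 - X 1 ^ N * w2) hc hE (by linear_combination X 1 ^ N * hw - X 2 ^ N * hv)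
  obtain ⟨δ, d0, d1, d2⟩ := syz a b c (X 0 ^ N * w0 - X 2 ^ N * u0) (X 0 ^ N * w1 - X 2 ^ N * u1)
    (X 0 ^ N * w2 - X 2 ^ N * u2) hc hE (by linear_combination X 2 ^ N * hu - X 0 ^ N * hw)
  have hrel : X 0 ^ N * γ + X 1 ^ N * δ + X 2 ^ N * β = 0 := by
    rcases hne with h | h | h <;> apply mul_right_cancel₀ h
    · linear_combination -X 0 ^ N * c0 - X 1 ^ N * d0 - X 2 ^ N * b0
    · linear_combination -X 0 ^ N * c1 - X 1 ^ N * d1 - X 2 ^ N * b1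
    · linear_combination -X 0 ^ N * c2 - X 1 ^ N * d2 - X 2 ^ N * b2
  obtain ⟨s, t, hst⟩ := kosz_last N _ _ _ hrel
  have e0 : (X 0 : P3) ^ N ∣ (u1 * X 2 - u2 * X 1) - t * a := by
    apply X_pow_dvd N 0 1 (by decide)
    exact ⟨(v1 * X 2 - v2 * X 1) + s * a, by linear_combination b0 + a * hst⟩
  have e1 : (X 0 : P3) ^ N ∣ (u2 * X 0 - u0 * X 2) - t * b := by
    apply X_pow_dvd N 0 1 (by decide)
    exact ⟨(v2 * X 0 - v0 * X 2) + s * b, by linear_combination b1 + b * hst⟩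
  have e2 : (X 0 : P3) ^ N ∣ (u0 * X 1 - u1 * X 0) - t * c := by
    apply X_pow_dvd N 0 1 (by decide)
    exact ⟨(v0 * X 1 - v1 * X 0) + s * c, by linear_combination b2 + c * hst⟩
  obtain ⟨k0, hk0⟩ := e0
  obtain ⟨k1, hk1⟩ := e1
  obtain ⟨k2, hk2⟩ := e2
  have hx : (X 0 : P3) ^ N ≠ 0 := pow_ne_zero _ (X_ne_zero 0)
  obtain ⟨m0, m1, m2, hm0, hm1, hm2⟩ := kosz k0 k1 k2 (by
    apply mul_left_cancel₀ hx
    linear_combination -X 0 * hk0 - X 1 * hk1 - X 2 * hk2 - t * hE)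
  refine ⟨m0, m1, m2, ?_⟩
  apply mul_left_cancel₀ hx
  -- (u - x^N m) × R = t ω, hence (u - x^N m)·ω = 0
  rw [hm0] at hk0
  rw [hm1] at hk1
  rw [hm2] at hk2
  have hx1 : (X 0 : P3) ≠ 0 := X_ne_zero 0
  rw [hu]
  apply mul_left_cancel₀ hx1
  linear_combination (u0 - X 0 ^ N * m0) * hE + c * hk1 - b * hk2

lemma aeval_line (f : P3) (n : ℕ) (hf : f.IsHomogeneous n) (r : Fin 3 → ℂ) (k : Fin 3) :
    aeval (fun i => (C (r i) * X k : P3)) f = C (eval r f) * X k ^ n := by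
  rw [aeval_def, eval₂_eq, eval_eq, map_sum, Finset.sum_mul]
  refine Finset.sum_congr rfl fun e he => ?_
  have hdeg := hf (mem_support_iff.1 he)
  rw [Finsupp.weight_apply, Finsupp.sum] at hdeg
  simp only [mul_pow, Finset.prod_mul_distrib, Finset.prod_pow_eq_pow_sum, map_mul, map_prod,
    map_pow]
  rw [← hdeg]
  simp [mul_assoc, algebraMap_eq]

lemma sub_mem_span (f : P3) (J : Ideal P3) (Y : Fin 3 → P3) (h : ∀ i, X i - Y i ∈ J) :
    f - aeval Y f ∈ J := by
  rw [← Ideal.Quotient.mk_eq_mk_iff_sub_mem]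
  have : (Ideal.Quotient.mkₐ ℂ J) = (Ideal.Quotient.mkₐ ℂ J).comp (aeval Y) := by
    ext i
    simpa using (Ideal.Quotient.mk_eq_mk_iff_sub_mem _ _).2 (h i)
  exact congrArg (fun φ => φ f) this

lemma mem_line (f : P3) (n : ℕ) (hf : f.IsHomogeneous n) (p : Fin 3 → ℂ) (hp : eval p f = 0)
    (k l m : Fin 3) (hk : p k ≠ 0) (hall : ∀ i, i = k ∨ i = l ∨ i = m) :
    ∃ A B : P3, f = A * (C (p k) * X l - C (p l) * X k) + B * (C (p k) * X m - C (p m) * X k) := by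
  have h1 : eval (fun i => p i / p k) f = 0 := by
    have h2 := aeval_line f n hf (fun i => p i / p k) k
    have h3 := congrArg (eval p) h2
    rw [aeval_def, ← coe_eval₂Hom] at h3
    have h4 : (eval p) ((eval₂Hom (algebraMap ℂ P3) fun i => (C (p i / p k) * X k : P3)) f)
        = eval p f := by
      rw [← RingHom.comp_apply]
      congr 1
      ext i
      · simp [algebraMap_eq]
      · simp [hk]
    rw [h4, hp] at h3
    simp at h3
    rcases h3 with h3 | h3
    · exact h3
    · exact absurd h3.1 hk
  have h2 := sub_mem_span f (Ideal.span {(C (p k) * X l - C (p l) * X k : P3),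
    C (p k) * X m - C (p m) * X k}) (fun i => C (p i / p k) * X k) (by
      intro i
      rw [Ideal.mem_span_pair]
      have hC : (C (p k) * C (p k)⁻¹ : P3) = 1 := by rw [← C_mul, mul_inv_cancel₀ hk, C_1]
      simp only [div_eq_mul_inv, C_mul]
      rcases hall i with rfl | rfl | rfl
      · exact ⟨0, 0, by linear_combination X i * hC⟩
      · exact ⟨C (p k)⁻¹, 0, by linear_combination X i * hC⟩
      · exact ⟨0, C (p k)⁻¹, by linear_combination X i * hC⟩)
  rw [aeval_line f n hf, h1, Ideal.mem_span_pair] at h2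
  obtain ⟨A, B, h⟩ := h2
  exact ⟨A, B, by rw [h]; simp⟩

lemma local_gen (w : Fin 3 → P3) (n : ℕ) (hw : ∀ i, (w i).IsHomogeneous n)
    (p : Fin 3 → ℂ) (hp : ∀ i, eval p (w i) = 0) (g : P3) (n' : ℕ) (hg : g.IsHomogeneous n')
    (hgp : eval p g = 0)
    (k l m : Fin 3) (hk : p k ≠ 0) (hall : ∀ i, i = k ∨ i = l ∨ i = m)
    (hkl : k ≠ l) (hkm : k ≠ m) (hlm : l ≠ m)
    (hJ : eval p (pderiv l (w l)) * eval p (pderiv m (w m))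
      - eval p (pderiv m (w l)) * eval p (pderiv l (w m)) ≠ 0) :
    ∃ D : P3, eval p D ≠ 0 ∧ D * g ∈ Ideal.span (Set.range w) := by
  obtain ⟨A, B, h1⟩ := mem_line (w l) n (hw l) p (hp l) k l m hk hall
  obtain ⟨A', B', h2⟩ := mem_line (w m) n (hw m) p (hp m) k l m hk hall
  obtain ⟨P, Q, h3⟩ := mem_line g n' hg p hgp k l m hk hall
  refine ⟨A * B' - B * A', ?_, ?_⟩
  · intro h0
    apply hJ
    rw [h1, h2]
    simp only [Derivation.leibniz, map_add, map_sub, smul_eq_mul, pderiv_C, map_mul, eval_C, eval_X,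
      pderiv_X_self, pderiv_X_of_ne hkl, pderiv_X_of_ne hkm, pderiv_X_of_ne hlm,
      pderiv_X_of_ne hlm.symm, map_zero, map_one]
    simp only [map_sub, map_mul] at h0
    linear_combination (p k)^2 * h0
  · have e : (A * B' - B * A') * g = (P * B' - Q * A') * w l + (Q * A - P * B) * w m := by
      rw [h1, h2, h3]; ring
    rw [e]
    exact Ideal.add_mem _ (Ideal.mul_mem_left _ _ (Ideal.subset_span ⟨l, rfl⟩))
      (Ideal.mul_mem_left _ _ (Ideal.subset_span ⟨m, rfl⟩))

lemma eval_compM (M : Matrix (Fin 3) (Fin 3) ℂ) (f : P3) (q : Fin 3 → ℂ) :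
    eval q (compM M f) = eval (fun i => ∑ j, M i j * q j) f := by
  rw [compM, aeval_def, ← coe_eval₂Hom, ← RingHom.comp_apply]
  congr 1
  ext i <;> simp [algebraMap_eq]

lemma pderiv_compM (M : Matrix (Fin 3) (Fin 3) ℂ) (f : P3) (j : Fin 3) :
    pderiv j (compM M f) = ∑ i, C (M i j) * compM M (pderiv i f) := by
  induction f using MvPolynomial.induction_on with
  | C a => simp [compM, algebraMap_eq]
  | add p q hp hq =>
    simp only [compM, map_add] at hp hq ⊢
    rw [hp, hq, ← Finset.sum_add_distrib]
    exact Finset.sum_congr rfl fun i _ => by ring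
  | mul_X p i hp =>
    simp only [compM, map_mul, Derivation.leibniz, smul_eq_mul, aeval_X, map_add] at hp ⊢
    rw [hp]
    simp only [Fin.sum_univ_three, map_add, Derivation.leibniz, smul_eq_mul, pderiv_C]
    fin_cases i <;> fin_cases j <;> simp [pderiv_X] <;> ring

lemma hom_zero (w : Fin 3 → P3) (d : ℕ) (hw : ∀ i, (w i).IsHomogeneous (d + 1)) (g : P3)
    (hg : g.IsHomogeneous d) (u : Fin 3 → P3) (h : g = ∑ i, u i * w i) : g = 0 := by
  classical
  ext e
  rw [coeff_zero]
  by_contra hne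
  have hd := hg hne
  apply hne
  rw [h, coeff_sum]
  refine Finset.sum_eq_zero fun i _ => ?_
  rw [coeff_mul]
  refine Finset.sum_eq_zero fun x hx => ?_
  by_contra hx0
  have h2 := hw i (right_ne_zero_of_mul hx0)
  rw [Finset.HasAntidiagonal.mem_antidiagonal] at hx
  rw [← hx, map_add] at hd
  omega

/-- The radiality of `[0:0:1]` after pullback by `M`. -/
def Rad (M : Matrix (Fin 3) (Fin 3) ℂ) (a b c : P3) : Prop :=
  eval ![0, 0, 1] (pderiv 0 (pullbackM M a b c 0)) = 0 ∧
         eval ![0, 0, 1] (pderiv 1 (pullbackM M a b c 1)) = 0 ∧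
         eval ![0, 0, 1] (pderiv 1 (pullbackM M a b c 0)) =
           -eval ![0, 0, 1] (pderiv 0 (pullbackM M a b c 1)) ∧
         eval ![0, 0, 1] (pderiv 1 (pullbackM M a b c 0)) ≠ 0

lemma radial_jac (a b c : P3)
    (H : ∀ M : Matrix (Fin 3) (Fin 3) ℂ, M.det ≠ 0 →
      eval ![0, 0, 1] (pullbackM M a b c 0) = 0 →
      eval ![0, 0, 1] (pullbackM M a b c 1) = 0 → Rad M a b c)
    (p : Fin 3 → ℂ) (hp : ∀ i, eval p (![a, b, c] i) = 0) (k l m : Fin 3) (hk : p k ≠ 0)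
    (hkl : k ≠ l) (hkm : k ≠ m) (hlm : l ≠ m) :
    eval p (pderiv l (![a, b, c] l)) = 0 ∧ eval p (pderiv m (![a, b, c] m)) = 0 ∧
    eval p (pderiv m (![a, b, c] l)) = - eval p (pderiv l (![a, b, c] m)) ∧
    eval p (pderiv m (![a, b, c] l)) ≠ 0 := by
  let M : Matrix (Fin 3) (Fin 3) ℂ :=
    Matrix.of fun i j => ![if i = l then 1 else 0, if i = m then 1 else 0, p i] j
  have hM0 : ∀ i, M i 0 = if i = l then 1 else 0 := fun i => rfl
  have hM1 : ∀ i, M i 1 = if i = m then 1 else 0 := fun i => rfl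
  have hM2 : ∀ i, M i 2 = p i := fun i => rfl
  have hdet : M.det ≠ 0 := by
    rw [Matrix.det_fin_three]
    simp only [hM0, hM1, hM2]
    clear_value M
    clear H hp hM0 hM1 hM2
    fin_cases k <;> fin_cases l <;> fin_cases m <;> simp_all
  have hpb0 : pullbackM M a b c 0 = compM M (![a, b, c] l) := by
    simp only [pullbackM, hM0]
    clear_value M
    fin_cases l <;> simp
  have hpb1 : pullbackM M a b c 1 = compM M (![a, b, c] m) := by
    simp only [pullbackM, hM1]
    clear_value M
    fin_cases m <;> simp
  have hev : ∀ f : P3, eval ![0, 0, 1] (compM M f) = eval p f := by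
    intro f
    rw [eval_compM]
    congr 2
    ext i
    simp [Fin.sum_univ_three, hM2]
  have hd0 : ∀ f : P3, pderiv 0 (compM M f) = compM M (pderiv l f) := by
    intro f
    rw [pderiv_compM]
    simp [hM0]
  have hd1 : ∀ f : P3, pderiv 1 (compM M f) = compM M (pderiv m f) := by
    intro f
    rw [pderiv_compM]
    simp [hM1]
  have := H M hdet (by rw [hpb0, hev, hp]) (by rw [hpb1, hev, hp])
  simpa only [Rad, hpb0, hpb1, hd0, hd1, hev] using this

lemma pderiv_euler (w : Fin 3 → P3) (hE : X 0 * w 0 + X 1 * w 1 + X 2 * w 2 = 0) (j : Fin 3) :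
    w j + ∑ i, X i * pderiv j (w i) = 0 := by
  have h := congrArg (pderiv j) hE
  simp only [map_add, Derivation.leibniz, smul_eq_mul, map_zero] at h
  rw [Fin.sum_univ_three]
  fin_cases j <;> simp [pderiv_X] at h ⊢ <;> linear_combination h

lemma exists_perm (k : Fin 3) : ∃ l m : Fin 3, k ≠ l ∧ k ≠ m ∧ l ≠ m ∧
    ∀ i, i = k ∨ i = l ∨ i = m := by
  revert k; decide

lemma sum_klm (k l m : Fin 3) (hkl : k ≠ l) (hkm : k ≠ m) (hlm : l ≠ m) (f : Fin 3 → ℂ) :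
    ∑ i, f i = f k + f l + f m := by
  rw [Fin.sum_univ_three]
  fin_cases k <;> fin_cases l <;> fin_cases m <;> simp_all <;> ring

/-- At a radial singularity the whole Jacobian matrix is skew-symmetric. -/
lemma skew_at (J : Fin 3 → Fin 3 → ℂ) (p : Fin 3 → ℂ) (h1 : ∀ i, ∑ j, p j * J i j = 0)
    (h2 : ∀ j, ∑ i, p i * J i j = 0) (k l m : Fin 3) (hk : p k ≠ 0)
    (hkl : k ≠ l) (hkm : k ≠ m) (hlm : l ≠ m) (hall : ∀ i, i = k ∨ i = l ∨ i = m)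
    (hl : J l l = 0) (hm : J m m = 0) (hs : J l m = - J m l) (i j : Fin 3) :
    J i j + J j i = 0 := by
  simp only [sum_klm k l m hkl hkm hlm] at h1 h2
  have ekl : J k l + J l k = 0 := by
    apply mul_left_cancel₀ hk
    linear_combination h1 l + h2 l - 2 * p l * hl - p m * hs
  have ekm : J k m + J m k = 0 := by
    apply mul_left_cancel₀ hk
    linear_combination h1 m + h2 m - 2 * p m * hm - p l * hs
  have ekk : J k k + J k k = 0 := by
    apply mul_left_cancel₀ hk
    linear_combination h1 k + h2 k - p l * ekl - p m * ekm
  rcases hall i with rfl | rfl | rfl <;> rcases hall j with rfl | rfl | rfl <;>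
    first
    | assumption
    | linear_combination ekl
    | linear_combination ekm
    | linear_combination 2 * hl
    | linear_combination 2 * hm
    | linear_combination hs

lemma main_aux (d : ℕ) (hd : 1 ≤ d) (a b c : P3) (hfol : IsFoliation d a b c)
    (H : ∀ M : Matrix (Fin 3) (Fin 3) ℂ, M.det ≠ 0 →
      eval ![0, 0, 1] (pullbackM M a b c 0) = 0 →
      eval ![0, 0, 1] (pullbackM M a b c 1) = 0 → Rad M a b c) : False := by
  obtain ⟨ha, hb, hc, hcop, hE⟩ := hfol
  set w : Fin 3 → P3 := ![a, b, c] with hw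
  have hhom : ∀ i, (w i).IsHomogeneous (d + 1) := by
    intro i; fin_cases i <;> simpa [hw]
  have hE' : X 0 * w 0 + X 1 * w 1 + X 2 * w 2 = 0 := hE
  have hEul : ∀ i, ∑ j, X j * pderiv j (w i) = ((d + 1 : ℕ) : P3) * w i := by
    intro i
    rw [(hhom i).sum_X_mul_pderiv, nsmul_eq_mul]
  have hEul2 := pderiv_euler w hE'
  have hghom : ∀ i j, (pderiv j (w i) + pderiv i (w j)).IsHomogeneous d := by
    intro i j
    exact ((hhom i).pderiv (i := j)).add ((hhom j).pderiv (i := i))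
  have hpt : ∀ i j (p : Fin 3 → ℂ), p ≠ 0 → ∃ D : P3, eval p D ≠ 0 ∧
      D * (pderiv j (w i) + pderiv i (w j)) ∈ Ideal.span (Set.range w) := by
    intro i j p hp
    by_cases hs : ∀ i, eval p (w i) = 0
    · obtain ⟨k, hk⟩ := Function.ne_iff.1 hp
      obtain ⟨l, m, hkl, hkm, hlm, hall⟩ := exists_perm k
      obtain ⟨r1, r2, r3, r4⟩ := radial_jac a b c H p hs k l m hk hkl hkm hlm
      refine local_gen w (d + 1) hhom p hs _ d (hghom i j) ?_ k l m hk hall hkl hkm hlm ?_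
      · rw [map_add]
        refine skew_at (fun i j => eval p (pderiv j (w i))) p ?_ ?_ k l m hk hkl hkm hlm hall
          r1 r2 r3 i j
        · intro i
          have := congrArg (eval p) (hEul i)
          simpa [map_sum, hs] using this
        · intro j
          have := congrArg (eval p) (hEul2 j)
          simpa [map_sum, hs] using this
      · intro h0
        have e : eval p (pderiv m (w l)) * eval p (pderiv m (w l)) = 0 := by
          change eval p (pderiv l (w l)) = 0 at r1
          change eval p (pderiv m (w l)) = -eval p (pderiv l (w m)) at r3
          rw [r1] at h0
          linear_combination h0 + eval p (pderiv m (w l)) * r3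
        exact r4 (mul_self_eq_zero.1 e)
    · push Not at hs
      obtain ⟨t, ht⟩ := hs
      exact ⟨w t, ht, Ideal.mul_mem_right _ _ (Ideal.subset_span ⟨t, rfl⟩)⟩
  have hzero : ∀ i j, pderiv j (w i) + pderiv i (w j) = 0 := by
    intro i j
    set g := pderiv j (w i) + pderiv i (w j) with hg
    let K : Ideal P3 := Submodule.comap (LinearMap.toSpanSingleton P3 P3 g) (Ideal.span (Set.range w))
    have hK : ∀ D : P3, D ∈ K ↔ D * g ∈ Ideal.span (Set.range w) := fun D => Iff.rfl
    have hrad : ∀ t : Fin 3, (X t : P3) ∈ K.radical := by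
      intro t
      rw [← vanishingIdeal_zeroLocus_eq_radical (K := ℂ), mem_vanishingIdeal_iff]
      intro x hx
      by_cases hx0 : x = 0
      · simp [hx0]
      · obtain ⟨D, hD, hDg⟩ := hpt i j x hx0
        exact absurd (by simpa [aeval_eq_eval] using hx D ((hK D).2 hDg)) hD
    choose n hn using hrad
    have hall : ∀ t, (X t : P3) ^ (∑ t, n t) * g ∈ Ideal.span (Set.range w) := by
      intro t
      rw [← hK]
      exact K.pow_mem_of_pow_mem (hn t) (Finset.single_le_sum (fun _ _ => Nat.zero_le _)
        (Finset.mem_univ t))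
    obtain ⟨u0, u1, u2, hu⟩ := saturated a b c g hcop hE (∑ t, n t) (by
      intro t
      obtain ⟨u, hu⟩ := (Ideal.mem_span_range_iff_exists_fun).1 (hall t)
      refine ⟨u 0, u 1, u 2, ?_⟩
      rw [← hu, Fin.sum_univ_three]
      rfl)
    refine hom_zero w d hhom g (hghom i j) ![u0, u1, u2] ?_
    rw [hu, Fin.sum_univ_three]
    rfl
  have hw0 : ∀ i, w i = 0 := by
    intro i
    have h1 := hEul i
    have h2 := hEul2 i
    rw [Fin.sum_univ_three] at h1 h2
    have h3 : (d : P3) * w i = 0 := by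
      push_cast at h1
      linear_combination -h1 - h2 + X 0 * hzero i 0 + X 1 * hzero i 1 + X 2 * hzero i 2
    rcases mul_eq_zero.1 h3 with h | h
    · have : d = 0 := by exact_mod_cast h
      omega
    · exact h
  have e0 : a = 0 := hw0 0
  have e1 : b = 0 := hw0 1
  have e2 : c = 0 := hw0 2
  exact (primeX 0).not_isUnit (hcop (X 0) (by simp [e0]) (by simp [e1]) (by simp [e2]))

/-- **Every foliation of degree `d ≥ 1` on `ℙ²(ℂ)` has a non-radial singularity.**
After a suitable linear change of coordinates `M`, the point `[0:0:1]` is a singular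
point of the pulled-back foliation `M*ω = a′dx + b′dy + c′dz`, and it fails the radiality
condition `∂a′/∂x = ∂b′/∂y = 0 ∧ ∂a′/∂y = −∂b′/∂x ≠ 0` at `(0,0,1)`. -/
theorem exists_nonradial_singularity
    (d : ℕ) (hd : 1 ≤ d) (a b c : P3) (hfol : IsFoliation d a b c) :
    ∃ M : Matrix (Fin 3) (Fin 3) ℂ, M.det ≠ 0 ∧
      eval ![0, 0, 1] (pullbackM M a b c 0) = 0 ∧
      eval ![0, 0, 1] (pullbackM M a b c 1) = 0 ∧
      ¬ (eval ![0, 0, 1] (pderiv 0 (pullbackM M a b c 0)) = 0 ∧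
         eval ![0, 0, 1] (pderiv 1 (pullbackM M a b c 1)) = 0 ∧
         eval ![0, 0, 1] (pderiv 1 (pullbackM M a b c 0)) =
           -eval ![0, 0, 1] (pderiv 0 (pullbackM M a b c 1)) ∧
         eval ![0, 0, 1] (pderiv 1 (pullbackM M a b c 0)) ≠ 0) := by
  by_contra hcon
  refine main_aux d hd a b c hfol fun M h1 h2 h3 => ?_
  by_contra h4
  exact hcon ⟨M, h1, h2, h3, h4⟩
end
end

section
/- Let d ≥ 3 and let A, B ∈ ℂ[x,y] be homogeneous of degree d without common factor such that every linear factor of D = (∂A/∂x)(∂B/∂y) − (∂A/∂y)(∂B/∂x) divides C = xA + yB (i.e. ω = A dx + B dy defines a convex homogeneous foliation of degree d). Then D = c·ℓ₁^{d−1}ℓ₂^{d−1} for some c ∈ ℂ∖{0} and non-proportional linear forms ℓ₁, ℓ₂ (i.e. the foliation has type 2·R_{d−1}) if and only if ω is linearly conjugate to ω₁^d = y^d dx − x^d dy. -/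
open MvPolynomial

noncomputable section

/-- The inflection polynomial `D_ω = A_x B_y - A_y B_x` of `ω = A dx + B dy`. -/
def Dpoly (A B : P2) : P2 :=
  pderiv 0 A * pderiv 1 B - pderiv 1 A * pderiv 0 B

/-- The tangent cone `C_ω = xA + yB` of `ω = A dx + B dy`. -/
def Cpoly (A B : P2) : P2 := X 0 * A + X 1 * B

/-- `A` and `B` have no common (non-unit) factor. -/
def NoCommonFactor (A B : P2) : Prop := ∀ p : P2, p ∣ A → p ∣ B → IsUnit p

/-- Convexity: every linear factor of `D_ω` divides `C_ω`. -/
def IsConvexPair (A B : P2) : Prop :=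
  ∀ l : P2, l.IsHomogeneous 1 → l ≠ 0 → l ∣ Dpoly A B → l ∣ Cpoly A B

/-- Composition of a polynomial with the linear map `φ(x,y) = (a₁x + a₂y, a₃x + a₄y)`. -/
def comp2 (a₁ a₂ a₃ a₄ : ℂ) (p : P2) : P2 :=
  aeval ![C a₁ * X 0 + C a₂ * X 1, C a₃ * X 0 + C a₄ * X 1] p

/-- `ω = A dx + B dy` is linearly conjugate to `ω' = A' dx + B' dy`:
`φ*ω = λ ω'` for some `φ ∈ GL₂(ℂ)` and `λ ∈ ℂ \ {0}`. -/
def LinConj (A B A' B' : P2) : Prop :=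
  ∃ a₁ a₂ a₃ a₄ lam : ℂ, a₁ * a₄ - a₂ * a₃ ≠ 0 ∧ lam ≠ 0 ∧
    C a₁ * comp2 a₁ a₂ a₃ a₄ A + C a₃ * comp2 a₁ a₂ a₃ a₄ B = C lam * A' ∧
    C a₂ * comp2 a₁ a₂ a₃ a₄ A + C a₄ * comp2 a₁ a₂ a₃ a₄ B = C lam * B'

/-- Two polynomials are proportional (one is a constant multiple of the other). -/
def Proportional (l₁ l₂ : P2) : Prop := ∃ t : ℂ, l₁ = C t * l₂ ∨ l₂ = C t * l₁

set_option linter.unusedSimpArgs false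

theorem comp2_add (a b c e : ℂ) (p q : P2) :
    comp2 a b c e (p + q) = comp2 a b c e p + comp2 a b c e q := by simp [comp2]

theorem comp2_sub (a b c e : ℂ) (p q : P2) :
    comp2 a b c e (p - q) = comp2 a b c e p - comp2 a b c e q := by simp [comp2]

theorem comp2_mul (a b c e : ℂ) (p q : P2) :
    comp2 a b c e (p * q) = comp2 a b c e p * comp2 a b c e q := by simp [comp2]

theorem comp2_pow (a b c e : ℂ) (p : P2) (n : ℕ) :
    comp2 a b c e (p ^ n) = comp2 a b c e p ^ n := by simp [comp2]

theorem comp2_C (a b c e t : ℂ) : comp2 a b c e (C t) = C t := by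
  simp [comp2, MvPolynomial.algebraMap_eq]

theorem comp2_X0 (a b c e : ℂ) : comp2 a b c e (X 0) = C a * X 0 + C b * X 1 := by
  simp [comp2]

theorem comp2_X1 (a b c e : ℂ) : comp2 a b c e (X 1) = C c * X 0 + C e * X 1 := by
  simp [comp2]

theorem comp2_dvd (a b c e : ℂ) {p q : P2} (h : p ∣ q) :
    comp2 a b c e p ∣ comp2 a b c e q := by
  obtain ⟨r, rfl⟩ := h
  exact ⟨_, comp2_mul _ _ _ _ _ _⟩

theorem comp2_comp2 (a b c e a' b' c' e' : ℂ) (p : P2) :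
    comp2 a b c e (comp2 a' b' c' e' p) =
      comp2 (a' * a + b' * c) (a' * b + b' * e) (c' * a + e' * c) (c' * b + e' * e) p := by
  induction p using MvPolynomial.induction_on with
  | C t => simp only [comp2_C]
  | add p q hp hq => simp only [comp2_add, hp, hq]
  | mul_X p i hp =>
    rw [comp2_mul, comp2_mul, comp2_mul, hp]
    refine congrArg _ ?_
    fin_cases i
    · simp only [Fin.zero_eta, comp2_X0, comp2_X1, comp2_add, comp2_mul, comp2_C, C_add, C_mul]
      ring
    · simp only [Fin.mk_one, comp2_X0, comp2_X1, comp2_add, comp2_mul, comp2_C, C_add, C_mul]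
      ring

theorem comp2_id (p : P2) : comp2 1 0 0 1 p = p := by
  induction p using MvPolynomial.induction_on with
  | C t => simp only [comp2_C]
  | add p q hp hq => simp only [comp2_add, hp, hq]
  | mul_X p i hp =>
    simp only [comp2_mul, hp]
    congr 1
    fin_cases i
    · simp [comp2_X0]
    · simp [comp2_X1]

theorem pderiv0_comp2 (a b c e : ℂ) (p : P2) :
    pderiv 0 (comp2 a b c e p) =
      C a * comp2 a b c e (pderiv 0 p) + C c * comp2 a b c e (pderiv 1 p) := by
  induction p using MvPolynomial.induction_on with
  | C t => simp [comp2_C, comp2]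
  | add p q hp hq => simp only [comp2_add, map_add, hp, hq]; ring
  | mul_X p i hp =>
    simp only [comp2_mul, Derivation.leibniz, hp, smul_eq_mul, comp2_add]
    fin_cases i
    · simp [comp2_X0, comp2_X1, comp2_mul, Derivation.leibniz, comp2_C, pderiv_X, Pi.single_apply,
        show comp2 a b c e 0 = 0 by simp [comp2], show comp2 a b c e 1 = 1 by simp [comp2]]
      ring
    · simp [comp2_X0, comp2_X1, comp2_mul, Derivation.leibniz, comp2_C, pderiv_X, Pi.single_apply,
        show comp2 a b c e 0 = 0 by simp [comp2], show comp2 a b c e 1 = 1 by simp [comp2]]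
      ring

theorem pderiv1_comp2 (a b c e : ℂ) (p : P2) :
    pderiv 1 (comp2 a b c e p) =
      C b * comp2 a b c e (pderiv 0 p) + C e * comp2 a b c e (pderiv 1 p) := by
  induction p using MvPolynomial.induction_on with
  | C t => simp [comp2_C, comp2]
  | add p q hp hq => simp only [comp2_add, map_add, hp, hq]; ring
  | mul_X p i hp =>
    simp only [comp2_mul, Derivation.leibniz, hp, smul_eq_mul, comp2_add]
    fin_cases i
    · simp [comp2_X0, comp2_X1, comp2_mul, Derivation.leibniz, comp2_C, pderiv_X, Pi.single_apply,
        show comp2 a b c e 0 = 0 by simp [comp2], show comp2 a b c e 1 = 1 by simp [comp2]]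
      ring
    · simp [comp2_X0, comp2_X1, comp2_mul, Derivation.leibniz, comp2_C, pderiv_X, Pi.single_apply,
        show comp2 a b c e 0 = 0 by simp [comp2], show comp2 a b c e 1 = 1 by simp [comp2]]
      ring

theorem Dpoly_pullback (a b c e : ℂ) (A B : P2) :
    Dpoly (C a * comp2 a b c e A + C c * comp2 a b c e B)
      (C b * comp2 a b c e A + C e * comp2 a b c e B) =
      C ((a * e - b * c) ^ 2) * comp2 a b c e (Dpoly A B) := by
  simp only [Dpoly, map_add, pderiv_C_mul, pderiv0_comp2, pderiv1_comp2, comp2_sub,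
    comp2_mul, smul_eq_C_mul, C_pow, C_sub, C_mul]
  ring

theorem Cpoly_pullback (a b c e : ℂ) (A B : P2) :
    Cpoly (C a * comp2 a b c e A + C c * comp2 a b c e B)
      (C b * comp2 a b c e A + C e * comp2 a b c e B) = comp2 a b c e (Cpoly A B) := by
  simp only [Cpoly, comp2_add, comp2_mul, comp2_X0, comp2_X1]
  ring

theorem linform_hom (a b : ℂ) : (C a * X 0 + C b * X 1 : P2).IsHomogeneous 1 := by
  refine IsHomogeneous.add ?_ ?_
  · simpa using (isHomogeneous_C (Fin 2) a).mul (isHomogeneous_X ℂ (0 : Fin 2))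
  · simpa using (isHomogeneous_C (Fin 2) b).mul (isHomogeneous_X ℂ (1 : Fin 2))

theorem linform_eval (a b x y : ℂ) :
    eval ![x, y] (C a * X 0 + C b * X 1 : P2) = a * x + b * y := by simp

theorem comp2_hom (a b c e : ℂ) {p : P2} {n : ℕ} (h : p.IsHomogeneous n) :
    (comp2 a b c e p).IsHomogeneous n := by
  have := h.aeval (g := (![C a * X 0 + C b * X 1, C c * X 0 + C e * X 1] : Fin 2 → P2)) (n := 1) (by
    intro i
    fin_cases i
    · exact linform_hom a b
    · exact linform_hom c e)
  simpa [comp2] using this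

theorem pullback_hom (a b c e s t : ℂ) {p q : P2} {n : ℕ} (h : p.IsHomogeneous n)
    (h' : q.IsHomogeneous n) :
    (C s * comp2 a b c e p + C t * comp2 a b c e q).IsHomogeneous n := by
  refine IsHomogeneous.add ?_ ?_
  · simpa using (isHomogeneous_C (Fin 2) s).mul (comp2_hom a b c e h)
  · simpa using (isHomogeneous_C (Fin 2) t).mul (comp2_hom a b c e h')

theorem euler2 {p : P2} {n : ℕ} (h : p.IsHomogeneous n) {i j : Fin 2} (hij : i ≠ j) :
    X i * pderiv i p + X j * pderiv j p = (n : P2) * p := by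
  have := h.sum_X_mul_pderiv
  rw [Fin.sum_univ_two, nsmul_eq_mul] at this
  rw [← this]
  fin_cases i <;> fin_cases j <;> simp_all
  rw [add_comm, this]

theorem linform_eq {l : P2} (h : l.IsHomogeneous 1) : ∃ p q : ℂ, l = C p * X 0 + C q * X 1 := by
  have e := euler2 h (i := 0) (j := 1) (by decide)
  have h0 : (pderiv 0 l).IsHomogeneous 0 := h.pderiv
  have h1 : (pderiv 1 l).IsHomogeneous 0 := h.pderiv
  rw [← totalDegree_zero_iff_isHomogeneous, totalDegree_eq_zero_iff_eq_C] at h0 h1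
  refine ⟨coeff 0 (pderiv 0 l), coeff 0 (pderiv 1 l), ?_⟩
  rw [← h0, ← h1]
  rw [Nat.cast_one, one_mul] at e
  linear_combination -e

/-- Total ramification along a line forces a pure power. -/
theorem core {d : ℕ} (hd : 1 ≤ d) {A B : P2} (hA : A.IsHomogeneous d) (hB : B.IsHomogeneous d)
    {i j : Fin 2} (hij : i ≠ j) (hXB : X i ∣ B) (hXA : ¬ X i ∣ A) (c : ℂ)
    (hD : pderiv i A * pderiv j B - pderiv j A * pderiv i B =
      C c * X i ^ (d - 1) * X j ^ (d - 1)) :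
    ∃ b : ℂ, B = C b * X i ^ d := by
  have eA := euler2 hA hij
  have eB := euler2 hB hij
  have key : (d : P2) * (A * pderiv j B - B * pderiv j A) = X i ^ d * (C c * X j ^ (d - 1)) := by
    obtain ⟨m, rfl⟩ : ∃ m, d = m + 1 := ⟨d - 1, by omega⟩
    simp only [Nat.add_sub_cancel] at hD ⊢
    linear_combination (X i) * hD - pderiv j B * eA + pderiv j A * eB
  have hXi : (X i : P2) ≠ 0 := X_ne_zero i
  have hpr : Prime (X i : P2) := X_prime
  have hcast : ∀ n : ℕ, n ≠ 0 → ¬ (X i : P2) ∣ (n : P2) := by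
    intro n hn hdiv
    obtain ⟨r, hr⟩ := hdiv
    have := congrArg (eval (0 : Fin 2 → ℂ)) hr
    simp at this
    exact hn this
  have step : ∀ k, 1 ≤ k → k ≤ d → (X i : P2) ^ k ∣ B := by
    intro k hk
    induction k, hk using Nat.le_induction with
    | base => intro _; simpa using hXB
    | succ k hk ih =>
      intro hkd
      obtain ⟨B', hB'⟩ := ih (by omega)
      have hj : pderiv j B = X i ^ k * pderiv j B' := by
        rw [hB', Derivation.leibniz, Derivation.leibniz_pow, pderiv_X_of_ne hij]
        simp
      have hi : X i * pderiv i B = X i ^ k * ((k : P2) * B' + X i * pderiv i B') := by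
        obtain ⟨m, rfl⟩ : ∃ m, k = m + 1 := ⟨k - 1, by omega⟩
        rw [hB', Derivation.leibniz, Derivation.leibniz_pow, pderiv_X_self]
        simp
        ring
      have hk0 : (X i : P2) ^ k ≠ 0 := pow_ne_zero _ hXi
      have eB' : (k : P2) * B' + X i * pderiv i B' + X j * pderiv j B' = (d : P2) * B' := by
        apply mul_left_cancel₀ hk0
        rw [hi, hj] at eB
        linear_combination eB + (d : P2) * hB'
      obtain ⟨r, rfl⟩ : ∃ r, d = k + 1 + r := ⟨d - (k + 1), by omega⟩
      have h2 : ((k + 1 + r : ℕ) : P2) * (A * pderiv j B' - B' * pderiv j A) =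
          X i * (X i ^ r * (C c * X j ^ (k + 1 + r - 1))) := by
        apply mul_left_cancel₀ hk0
        have e3 : (X i : P2) ^ (k + 1 + r) = X i ^ k * (X i * X i ^ r) := by ring
        rw [hj, e3] at key
        linear_combination key + ((k + 1 + r : ℕ) : P2) * pderiv j A * hB'
      have h3 : (X i : P2) ∣ A * pderiv j B' - B' * pderiv j A :=
        (hpr.dvd_or_dvd (Dvd.intro _ h2.symm)).resolve_left (hcast _ (by omega))
      obtain ⟨s, hs⟩ := h3
      have h4 : (X i : P2) ∣ (k : P2) * (A * B') := by
        refine ⟨-A * pderiv i B' + B' * pderiv i A - X j * s, ?_⟩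
        linear_combination A * eB' - B' * eA - X j * hs
      have h5 := (hpr.dvd_or_dvd ((hpr.dvd_or_dvd h4).resolve_left
        (hcast _ (by omega)))).resolve_left hXA
      rw [hB', pow_succ]
      exact mul_dvd_mul_left _ h5
  obtain ⟨q, hq⟩ := step d hd le_rfl
  by_cases hq0 : q = 0
  · exact ⟨0, by rw [hq, hq0]; simp⟩
  · have hB0 : B ≠ 0 := by rw [hq]; exact mul_ne_zero (pow_ne_zero _ hXi) hq0
    have t := hB.totalDegree hB0
    rw [hq, totalDegree_mul_of_isDomain (pow_ne_zero _ hXi) hq0, totalDegree_X_pow] at t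
    have t0 : q.totalDegree = 0 := by omega
    rw [totalDegree_eq_zero_iff_eq_C] at t0
    exact ⟨_, by rw [hq, mul_comm]; congr 1⟩

theorem linform_not_unit (a b : ℂ) : ¬ IsUnit (C a * X 0 + C b * X 1 : P2) := by
  intro h
  have := h.map (eval ![(0 : ℂ), 0])
  rw [linform_eval] at this
  simp at this

theorem backward {d : ℕ} (hd : 3 ≤ d) {A B : P2} (h : LinConj A B (X 1 ^ d) (-X 0 ^ d)) :
    ∃ c : ℂ, c ≠ 0 ∧ ∃ l₁ l₂ : P2,
        l₁.IsHomogeneous 1 ∧ l₂.IsHomogeneous 1 ∧ l₁ ≠ 0 ∧ l₂ ≠ 0 ∧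
        ¬ Proportional l₁ l₂ ∧
        Dpoly A B = C c * l₁ ^ (d - 1) * l₂ ^ (d - 1) := by
  obtain ⟨a, b, c, e, lam, hdet, hlam, h1, h2⟩ := h
  have hD := Dpoly_pullback a b c e A B
  rw [h1, h2] at hD
  have hD' : Dpoly (C lam * X 1 ^ d) (C lam * (-X 0 ^ d)) =
      C (lam ^ 2 * d ^ 2) * X 0 ^ (d - 1) * X 1 ^ (d - 1) := by
    simp [Dpoly, Derivation.leibniz, Derivation.leibniz_pow, pderiv_X, Pi.single_apply]
    ring
  rw [hD'] at hD
  set δ := a * e - b * c with hδ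
  have hinv : ∀ p, comp2 (e / δ) (-b / δ) (-c / δ) (a / δ) (comp2 a b c e p) = p := by
    intro p
    rw [comp2_comp2]
    convert comp2_id p using 2 <;> field_simp <;> rw [hδ] <;> ring
  have hD2 := congrArg (comp2 (e / δ) (-b / δ) (-c / δ) (a / δ)) hD
  simp only [comp2_mul, comp2_pow, comp2_C, hinv, comp2_X0, comp2_X1] at hD2
  have hd0 : (d : ℂ) ≠ 0 := by exact_mod_cast (by omega : d ≠ 0)
  have hnp : ∀ t : ℂ, (C (e / δ) * X 0 + C (-b / δ) * X 1 : P2) ≠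
      C t * (C (-c / δ) * X 0 + C (a / δ) * X 1) := by
    intro t ht
    have h := congrArg (eval ![a, c]) ht
    rw [map_mul, linform_eval, linform_eval] at h
    simp only [eval_C] at h
    field_simp at h
    apply hdet
    linear_combination h
  have hnp' : ∀ t : ℂ, (C (-c / δ) * X 0 + C (a / δ) * X 1 : P2) ≠
      C t * (C (e / δ) * X 0 + C (-b / δ) * X 1) := by
    intro t ht
    have h := congrArg (eval ![b, e]) ht
    rw [map_mul, linform_eval, linform_eval] at h
    simp only [eval_C] at h
    field_simp at h
    apply hdet
    linear_combination h
  refine ⟨lam ^ 2 * d ^ 2 / δ ^ 2, by positivity, _, _, linform_hom (e / δ) (-b / δ),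
    linform_hom (-c / δ) (a / δ), ?_, ?_, ?_, ?_⟩
  · intro h0; exact hnp 0 (by rw [h0]; simp)
  · intro h0; exact hnp' 0 (by rw [h0]; simp)
  · rintro ⟨t, ht | ht⟩
    · exact hnp t ht
    · exact hnp' t ht
  · have hc : (C (δ ^ 2) : P2) ≠ 0 := by
      rw [Ne, C_eq_zero]; exact pow_ne_zero _ hdet
    apply mul_left_cancel₀ hc
    rw [← hD2, mul_assoc, mul_assoc, ← mul_assoc (C (δ ^ 2)), ← C_mul,
      mul_div_cancel₀ _ (pow_ne_zero 2 hdet)]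

theorem forward {d : ℕ} (hd : 3 ≤ d) {A B : P2} (hA : A.IsHomogeneous d) (hB : B.IsHomogeneous d)
    (hcop : NoCommonFactor A B) (hconv : IsConvexPair A B) {k : ℂ} (hk : k ≠ 0) {l₁ l₂ : P2}
    (hl₁ : l₁.IsHomogeneous 1) (hl₂ : l₂.IsHomogeneous 1) (h10 : l₁ ≠ 0) (h20 : l₂ ≠ 0)
    (hnp : ¬ Proportional l₁ l₂) (hD : Dpoly A B = C k * l₁ ^ (d - 1) * l₂ ^ (d - 1)) :
    LinConj A B (X 1 ^ d) (-X 0 ^ d) := by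
  have hC1 : l₁ ∣ Cpoly A B := hconv l₁ hl₁ h10 (by
    rw [hD]; exact ((dvd_pow_self _ (by omega)).mul_left _).mul_right _)
  have hC2 : l₂ ∣ Cpoly A B := hconv l₂ hl₂ h20 (by
    rw [hD]; exact (dvd_pow_self _ (by omega)).mul_left _)
  obtain ⟨p₁, q₁, rfl⟩ := linform_eq hl₁
  obtain ⟨p₂, q₂, rfl⟩ := linform_eq hl₂
  have hdel : p₁ * q₂ - p₂ * q₁ ≠ 0 := by
    intro h0
    apply hnp
    by_cases hp : p₂ = 0
    · have hq : q₂ ≠ 0 := by rintro rfl; apply h20; simp [hp]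
      have hp1 : p₁ = 0 := by
        rw [hp, zero_mul, sub_zero] at h0; exact (mul_eq_zero.mp h0).resolve_right hq
      refine ⟨q₁ / q₂, Or.inl ?_⟩
      rw [hp, hp1, mul_add, ← mul_assoc, ← mul_assoc, ← C_mul, ← C_mul, mul_zero,
        div_mul_cancel₀ _ hq]
    · refine ⟨p₁ / p₂, Or.inl ?_⟩
      rw [mul_add, ← mul_assoc, ← mul_assoc, ← C_mul, ← C_mul, div_mul_cancel₀ _ hp]
      congr 3
      field_simp
      linear_combination -h0
  set δ := p₁ * q₂ - p₂ * q₁ with hδ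
  obtain ⟨a, ha⟩ : ∃ a, a = q₂ / δ := ⟨_, rfl⟩
  obtain ⟨b, hb⟩ : ∃ b, b = -q₁ / δ := ⟨_, rfl⟩
  obtain ⟨c, hc⟩ : ∃ c, c = -p₂ / δ := ⟨_, rfl⟩
  obtain ⟨e, he⟩ : ∃ e, e = p₁ / δ := ⟨_, rfl⟩
  have i1 : p₁ * a + q₁ * c = 1 := by rw [ha, hc]; field_simp; rw [hδ]; ring
  have i2 : p₁ * b + q₁ * e = 0 := by rw [hb, he]; field_simp; ring
  have i3 : p₂ * a + q₂ * c = 0 := by rw [ha, hc]; field_simp; ring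
  have i4 : p₂ * b + q₂ * e = 1 := by rw [hb, he]; field_simp; rw [hδ]; ring
  have j1 : a * p₁ + b * p₂ = 1 := by rw [ha, hb]; field_simp; rw [hδ]; ring
  have j2 : a * q₁ + b * q₂ = 0 := by rw [ha, hb]; field_simp; ring
  have j3 : c * p₁ + e * p₂ = 0 := by rw [hc, he]; field_simp; ring
  have j4 : c * q₁ + e * q₂ = 1 := by rw [hc, he]; field_simp; rw [hδ]; ring
  have hdet : a * e - b * c ≠ 0 := by
    intro h0
    have : (p₁ * q₂ - p₂ * q₁) * (a * e - b * c) = 1 := by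
      linear_combination (p₂ * b + q₂ * e) * i1 + i4 - (p₁ * b + q₁ * e) * i3
    rw [h0] at this
    simp at this
  have hinv : ∀ p, comp2 p₁ q₁ p₂ q₂ (comp2 a b c e p) = p := by
    intro p
    rw [comp2_comp2, j1, j2, j3, j4, comp2_id]
  have L1 : comp2 a b c e (C p₁ * X 0 + C q₁ * X 1) = X 0 := by
    simp only [comp2_add, comp2_mul, comp2_C, comp2_X0, comp2_X1]
    have i1' := congrArg (C : ℂ → P2) i1
    have i2' := congrArg (C : ℂ → P2) i2
    simp only [C_add, C_mul, C_0, C_1] at i1' i2'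
    linear_combination X 0 * i1' + X 1 * i2'
  have L2 : comp2 a b c e (C p₂ * X 0 + C q₂ * X 1) = X 1 := by
    simp only [comp2_add, comp2_mul, comp2_C, comp2_X0, comp2_X1]
    have i1' := congrArg (C : ℂ → P2) i3
    have i2' := congrArg (C : ℂ → P2) i4
    simp only [C_add, C_mul, C_0, C_1] at i1' i2'
    linear_combination X 0 * i1' + X 1 * i2'
  have hDp := Dpoly_pullback a b c e A B
  have hCp := Cpoly_pullback a b c e A B
  have hA' := pullback_hom a b c e a c hA hB
  have hB' := pullback_hom a b c e b e hA hB
  rw [hD] at hDp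
  simp only [comp2_mul, comp2_pow, comp2_C, L1, L2] at hDp
  have hC1' := comp2_dvd a b c e hC1
  have hC2' := comp2_dvd a b c e hC2
  rw [L1, ← hCp] at hC1'
  rw [L2, ← hCp] at hC2'
  have hcomb : ∀ r : P2,
      r ∣ C a * comp2 a b c e A + C c * comp2 a b c e B →
      r ∣ C b * comp2 a b c e A + C e * comp2 a b c e B →
      IsUnit (comp2 p₁ q₁ p₂ q₂ r) := by
    intro r hr1 hr2
    apply hcop
    · have : r ∣ comp2 a b c e A := by
        have h := (hr1.mul_left (C p₁)).add (hr2.mul_left (C p₂))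
        have j1' := congrArg (C : ℂ → P2) j1
        have j3' := congrArg (C : ℂ → P2) j3
        simp only [C_add, C_mul, C_0, C_1] at j1' j3'
        convert h using 1
        linear_combination -comp2 a b c e A * j1' - comp2 a b c e B * j3'
      simpa only [hinv] using comp2_dvd p₁ q₁ p₂ q₂ this
    · have : r ∣ comp2 a b c e B := by
        have h := (hr1.mul_left (C q₁)).add (hr2.mul_left (C q₂))
        have j1' := congrArg (C : ℂ → P2) j2
        have j3' := congrArg (C : ℂ → P2) j4
        simp only [C_add, C_mul, C_0, C_1] at j1' j3'
        convert h using 1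
        linear_combination -comp2 a b c e A * j1' - comp2 a b c e B * j3'
      simpa only [hinv] using comp2_dvd p₁ q₁ p₂ q₂ this
  -- name the pulled back coefficients
  obtain ⟨A', hA'd⟩ : ∃ A', A' = C a * comp2 a b c e A + C c * comp2 a b c e B := ⟨_, rfl⟩
  obtain ⟨B', hB'd⟩ : ∃ B', B' = C b * comp2 a b c e A + C e * comp2 a b c e B := ⟨_, rfl⟩
  rw [← hA'd, ← hB'd] at hDp hC1' hC2' hcomb
  rw [← hA'd] at hA'
  rw [← hB'd] at hB'
  have hX01 : ¬ (X 0 : P2) ∣ X 1 := by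
    rintro ⟨r, hr⟩
    have := congrArg (eval ![(0 : ℂ), 1]) hr
    simp at this
  have hX10 : ¬ (X 1 : P2) ∣ X 0 := by
    rintro ⟨r, hr⟩
    have := congrArg (eval ![(1 : ℂ), 0]) hr
    simp at this
  have d0 : (X 0 : P2) ∣ B' := by
    have h : (X 0 : P2) ∣ X 1 * B' := (dvd_add_right (Dvd.intro _ rfl)).mp hC1'
    exact (X_prime.dvd_or_dvd h).resolve_left hX01
  have d1 : (X 1 : P2) ∣ A' := by
    have h : (X 1 : P2) ∣ X 0 * A' := (dvd_add_left (Dvd.intro _ rfl)).mp hC2'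
    exact (X_prime.dvd_or_dvd h).resolve_left hX10
  have n0 : ¬ (X 0 : P2) ∣ A' := by
    intro h
    have := hcomb _ h d0
    rw [comp2_X0] at this
    exact linform_not_unit _ _ this
  have n1 : ¬ (X 1 : P2) ∣ B' := by
    intro h
    have := hcomb _ d1 h
    rw [comp2_X1] at this
    exact linform_not_unit _ _ this
  have hDp' := hDp
  rw [← mul_assoc, ← mul_assoc, ← C_mul] at hDp'
  rw [Dpoly] at hDp'
  obtain ⟨β, hβ⟩ := core (by omega) hA' hB' (i := 0) (j := 1) (by decide) d0 n0 _ hDp'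
  obtain ⟨α, hα⟩ := core (by omega) hB' hA' (i := 1) (j := 0) (by decide) d1 n1
    ((a * e - b * c) ^ 2 * k) (by linear_combination hDp')
  have hα0 : α ≠ 0 := by
    rintro rfl
    apply n0
    rw [hα]; simp
  have hβ0 : β ≠ 0 := by
    rintro rfl
    apply n1
    rw [hβ]; simp
  obtain ⟨s, hs⟩ := IsAlgClosed.exists_pow_nat_eq (-α / β) (n := d - 1) (by omega)
  have hs0 : s ≠ 0 := by
    rintro rfl
    rw [zero_pow (by omega)] at hs
    have : -α / β ≠ 0 := div_ne_zero (neg_ne_zero.mpr hα0) hβ0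
    exact this hs.symm
  have hsd : β * s ^ d = -(α * s) := by
    obtain ⟨m, rfl⟩ : ∃ m, d = m + 1 := ⟨d - 1, by omega⟩
    simp only [Nat.add_sub_cancel] at hs
    rw [pow_succ, hs]
    field_simp
  have hcc : ∀ p, comp2 (a * s) b (c * s) e p = comp2 s 0 0 1 (comp2 a b c e p) := by
    intro p
    rw [comp2_comp2]
    simp
  refine ⟨a * s, b, c * s, e, α * s, ?_, mul_ne_zero hα0 hs0, ?_, ?_⟩
  · have : a * s * e - b * (c * s) = (a * e - b * c) * s := by ring
    rw [this]
    exact mul_ne_zero hdet hs0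
  · have h := congrArg (comp2 s 0 0 1) (hA'd.symm.trans hα)
    simp only [comp2_add, comp2_mul, comp2_C, comp2_pow, comp2_X1, ← hcc, C_0, C_1, zero_mul,
      one_mul, zero_add] at h
    simp only [C_mul]
    linear_combination C s * h
  · have h := congrArg (comp2 s 0 0 1) (hB'd.symm.trans hβ)
    simp only [comp2_add, comp2_mul, comp2_C, comp2_pow, comp2_X0, ← hcc, C_0, zero_mul,
      add_zero] at h
    have hsd' := congrArg (C : ℂ → P2) hsd
    simp only [C_mul, C_neg, C_pow] at hsd'
    simp only [C_mul]
    rw [h, mul_pow]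
    linear_combination X 0 ^ d * hsd'

/-- A convex homogeneous foliation `ω = A dx + B dy` of degree `d ≥ 3` has type
`2·R_{d−1}` if and only if `ω` is linearly conjugate to `ω₁^d = y^d dx − x^d dy`. -/
theorem type_two_R_dminus1_iff_conj
    (d : ℕ) (hd : 3 ≤ d)
    (A B : P2) (hA : A.IsHomogeneous d) (hB : B.IsHomogeneous d)
    (hcop : NoCommonFactor A B) (hconv : IsConvexPair A B) :
    (∃ c : ℂ, c ≠ 0 ∧ ∃ l₁ l₂ : P2,
        l₁.IsHomogeneous 1 ∧ l₂.IsHomogeneous 1 ∧ l₁ ≠ 0 ∧ l₂ ≠ 0 ∧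
        ¬ Proportional l₁ l₂ ∧
        Dpoly A B = C c * l₁ ^ (d - 1) * l₂ ^ (d - 1)) ↔
      LinConj A B (X 1 ^ d) (-X 0 ^ d) := by
  constructor
  · rintro ⟨c, hc, l₁, l₂, hl₁, hl₂, h10, h20, hnp, hD⟩
    exact forward hd hA hB hcop hconv hc hl₁ hl₂ h10 h20 hnp hD
  · exact backward hd
end
end

section
/- Let d ≥ 3, let ν be an integer with 1 ≤ ν ≤ d−2, and let A, B ∈ ℂ[x,y] be homogeneous of degree d without common factor such that every linear factor of D = (∂A/∂x)(∂B/∂y) − (∂A/∂y)(∂B/∂x) divides C = xA + yB (i.e. ω = A dx + B dy defines a convex homogeneous foliation of degree d). Then D = c·ℓ₁^{ν}ℓ₂^{d−ν−1}ℓ₃^{d−1} for some c ∈ ℂ∖{0} and pairwise non-proportional linear forms ℓ₁, ℓ₂, ℓ₃ (i.e. the foliation has type 1·R_ν + 1·R_{d−ν−1} + 1·R_{d−1}) if and only if ω is linearly conjugate to ω₃^{d,ν} = (Σ_{i=ν+1}^{d} binom(d,i) x^{d−i}y^{i}) dx − (Σ_{i=0}^{ν} binom(d,i) x^{d−i}y^{i})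 dy. -/
open MvPolynomial

noncomputable section

/-- The coefficient of `dx` in `ω₃^{d,ν}`: `Σ_{i=ν+1}^{d} binom(d,i) x^{d−i} y^{i}`. -/
def A3d (d ν : ℕ) : P2 :=
  ∑ i ∈ Finset.Icc (ν + 1) d, C ((d.choose i : ℂ)) * X 0 ^ (d - i) * X 1 ^ i

/-- The coefficient of `dy` in `ω₃^{d,ν}`: `−Σ_{i=0}^{ν} binom(d,i) x^{d−i} y^{i}`. -/
def B3d (d ν : ℕ) : P2 :=
  -∑ i ∈ Finset.range (ν + 1), C ((d.choose i : ℂ)) * X 0 ^ (d - i) * X 1 ^ i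

set_option linter.unusedSimpArgs false

/-- A homogeneous polynomial of degree 1 is a linear form. -/
theorem linear_form_eq (l : P2) (h : l.IsHomogeneous 1) :
    ∃ p q : ℂ, l = C p * X 0 + C q * X 1 := by
  have e := h.sum_X_mul_pderiv
  have c : ∀ i, ∃ p, pderiv i l = C p := fun i => by
    have h0 : (pderiv i l).IsHomogeneous 0 := h.pderiv
    exact ⟨_, totalDegree_eq_zero_iff_eq_C.1 ((totalDegree_zero_iff_isHomogeneous _).2 h0)⟩
  obtain ⟨p, hp⟩ := c 0
  obtain ⟨q, hq⟩ := c 1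
  refine ⟨p, q, ?_⟩
  rw [Fin.sum_univ_two, hp, hq, one_smul] at e
  rw [← e]; ring

theorem linear_form_homog (p q : ℂ) : (C p * X 0 + C q * X 1 : P2).IsHomogeneous 1 := by
  apply IsHomogeneous.add
  · simpa using (isHomogeneous_C (Fin 2) p).mul (isHomogeneous_X ℂ (0 : Fin 2))
  · simpa using (isHomogeneous_C (Fin 2) q).mul (isHomogeneous_X ℂ (1 : Fin 2))

theorem linear_form_prime (l : P2) (h : l.IsHomogeneous 1) (h0 : l ≠ 0) : Prime l := by
  apply Irreducible.prime
  apply irreducible_of_totalDegree_eq_one (h.totalDegree h0)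
  intro x hx
  rw [isUnit_iff_ne_zero]
  rintro rfl
  apply h0
  ext i
  simpa using hx i

theorem not_dvd_both_s15 (p q : ℂ) (h0 : (C p * X 0 + C q * X 1 : P2) ≠ 0)
    (h1 : (C p * X 0 + C q * X 1 : P2) ∣ X 0) (h2 : (C p * X 0 + C q * X 1 : P2) ∣ X 1) :
    False := by
  apply h0
  obtain ⟨u, hu⟩ := h1
  obtain ⟨v, hv⟩ := h2
  have e1 := congrArg (eval ![q, -p]) hu
  have e2 := congrArg (eval ![q, -p]) hv
  simp at e1 e2
  have hq : q = 0 := by rw [e1]; ring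
  have hp : p = 0 := by
    have : -p = 0 := by rw [e2]; ring
    simpa using this
  simp [hp, hq]

/-- If `l` divides its Jacobian with `G`, then it divides `G`. -/
theorem dvd_of_dvd_jac (d : ℕ) (hd : d ≠ 0) (G : P2) (hG : G.IsHomogeneous d) (p q : ℂ)
    (h0 : (C p * X 0 + C q * X 1 : P2) ≠ 0)
    (h : (C p * X 0 + C q * X 1 : P2) ∣ C p * pderiv 1 G - C q * pderiv 0 G) :
    (C p * X 0 + C q * X 1 : P2) ∣ G := by
  have e := hG.sum_X_mul_pderiv
  rw [Fin.sum_univ_two, nsmul_eq_mul] at e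
  have key : ∀ r : ℂ, r ≠ 0 → (C p * X 0 + C q * X 1 : P2) ∣ C r * ((d : P2) * G) →
      (C p * X 0 + C q * X 1 : P2) ∣ G := by
    intro r hr hh
    have hu : IsUnit (C (r * d) : P2) :=
      (IsUnit.mk0 (r * d) (mul_ne_zero hr (Nat.cast_ne_zero.2 hd))).map C
    rw [← hu.dvd_mul_left]
    simpa [mul_assoc] using hh
  by_cases hp : p = 0
  · by_cases hq : q = 0
    · simp [hp, hq] at h0
    · apply key q hq
      rw [← e]
      obtain ⟨u, hu⟩ := h
      refine ⟨pderiv 1 G - X 0 * u, ?_⟩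
      linear_combination (-X 0) * hu
  · apply key p hp
    rw [← e]
    obtain ⟨u, hu⟩ := h
    refine ⟨pderiv 0 G + X 1 * u, ?_⟩
    linear_combination (X 1) * hu

/-- Local form of convexity: order of tangency along a convex inflection line. -/
theorem local_order (d : ℕ) (hd : d ≠ 0) (A B : P2) (hA : A.IsHomogeneous d)
    (hB : B.IsHomogeneous d) (hcop : NoCommonFactor A B) (p q : ℂ)
    (h0 : (C p * X 0 + C q * X 1 : P2) ≠ 0)
    (hC : (C p * X 0 + C q * X 1 : P2) ∣ Cpoly A B) (n : ℕ)
    (hD : (C p * X 0 + C q * X 1 : P2) ^ n ∣ Dpoly A B) :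
    (C p * X 0 + C q * X 1 : P2) ^ (n + 1) ∣ C q * A - C p * B := by
  have hpr := linear_form_prime _ (linear_form_homog p q) h0
  suffices H : ∀ k, k ≤ n → (C p * X 0 + C q * X 1 : P2) ^ (k + 1) ∣ C q * A - C p * B from
    H n le_rfl
  intro k
  induction k with
  | zero =>
    intro _
    rw [zero_add, pow_one]
    obtain ⟨u, hu⟩ := hC
    unfold Cpoly at hu
    have d0 : (C p * X 0 + C q * X 1 : P2) ∣ X 0 * (C q * A - C p * B) :=
      ⟨C q * u - B, by linear_combination C q * hu⟩
    have d1 : (C p * X 0 + C q * X 1 : P2) ∣ X 1 * (C q * A - C p * B) :=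
      ⟨A - C p * u, by linear_combination - C p * hu⟩
    rcases hpr.dvd_or_dvd d0 with d0 | d0
    · rcases hpr.dvd_or_dvd d1 with d1 | d1
      · exact (not_dvd_both_s15 p q h0 d0 d1).elim
      · exact d1
    · exact d0
  | succ k ih =>
    intro hk
    obtain ⟨F, hF⟩ := ih (by omega)
    have hD' : (C p * X 0 + C q * X 1 : P2) ^ (k + 1) ∣ Dpoly A B :=
      (pow_dvd_pow _ hk).trans hD
    obtain ⟨u, hu⟩ := hD'
    unfold Dpoly at hu
    have F0 := congrArg (pderiv 0) hF
    have F1 := congrArg (pderiv 1) hF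
    simp [pderiv_mul, pderiv_pow, pderiv_C, Pi.single_apply] at F0 F1
    have key : ∀ G : P2, (∃ r : ℂ, pderiv 0 (C q * A - C p * B) * pderiv 1 G
          - pderiv 1 (C q * A - C p * B) * pderiv 0 G
          = C r * (pderiv 0 A * pderiv 1 B - pderiv 1 A * pderiv 0 B)) →
        (C p * X 0 + C q * X 1 : P2) ∣ F * (C p * pderiv 1 G - C q * pderiv 0 G) := by
      rintro G ⟨r, hr⟩
      simp [pderiv_mul, pderiv_C] at hr
      have hne : (C p * X 0 + C q * X 1 : P2) ^ k ≠ 0 := pow_ne_zero _ h0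
      have hu' : IsUnit (C ((k : ℂ) + 1) : P2) :=
        (IsUnit.mk0 ((k : ℂ) + 1) (Nat.cast_add_one_ne_zero k)).map C
      rw [← hu'.dvd_mul_left]
      refine ⟨C r * u - (pderiv 0 F * pderiv 1 G - pderiv 1 F * pderiv 0 G), ?_⟩
      apply mul_left_cancel₀ hne
      simp only [map_add, map_natCast, map_one]
      rw [hu, F0, F1] at hr
      linear_combination hr
    have kA := key A ⟨p, by simp [pderiv_mul, pderiv_C]; ring⟩
    have kB := key B ⟨q, by simp [pderiv_mul, pderiv_C]; ring⟩
    have : (C p * X 0 + C q * X 1 : P2) ∣ F := by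
      rcases hpr.dvd_or_dvd kA with h | hA'
      · exact h
      rcases hpr.dvd_or_dvd kB with h | hB'
      · exact h
      exact (hpr.not_isUnit (hcop _ (dvd_of_dvd_jac d hd A hA p q h0 hA')
        (dvd_of_dvd_jac d hd B hB p q h0 hB'))).elim
    rw [hF, pow_succ _ (k + 1)]
    exact mul_dvd_mul_left _ this

/-- `comp2` as an algebra homomorphism. -/
def comp2Hom (a₁ a₂ a₃ a₄ : ℂ) : P2 →ₐ[ℂ] P2 :=
  aeval ![C a₁ * X 0 + C a₂ * X 1, C a₃ * X 0 + C a₄ * X 1]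

theorem comp2_eq (a₁ a₂ a₃ a₄ : ℂ) (p : P2) : comp2 a₁ a₂ a₃ a₄ p = comp2Hom a₁ a₂ a₃ a₄ p := rfl

@[simp] theorem comp2Hom_X0 (a₁ a₂ a₃ a₄ : ℂ) :
    comp2Hom a₁ a₂ a₃ a₄ (X 0) = C a₁ * X 0 + C a₂ * X 1 := by simp [comp2Hom]

@[simp] theorem comp2Hom_X1 (a₁ a₂ a₃ a₄ : ℂ) :
    comp2Hom a₁ a₂ a₃ a₄ (X 1) = C a₃ * X 0 + C a₄ * X 1 := by simp [comp2Hom]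

@[simp] theorem comp2Hom_C (a₁ a₂ a₃ a₄ c : ℂ) : comp2Hom a₁ a₂ a₃ a₄ (C c) = C c := by
  simp [comp2Hom, algebraMap_eq]

theorem comp2Hom_inv (a₁ a₂ a₃ a₄ b₁ b₂ b₃ b₄ : ℂ)
    (h1 : b₁ * a₁ + b₂ * a₃ = 1) (h2 : b₁ * a₂ + b₂ * a₄ = 0)
    (h3 : b₃ * a₁ + b₄ * a₃ = 0) (h4 : b₃ * a₂ + b₄ * a₄ = 1) (p : P2) :
    comp2Hom a₁ a₂ a₃ a₄ (comp2Hom b₁ b₂ b₃ b₄ p) = p := by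
  have : (comp2Hom a₁ a₂ a₃ a₄).comp (comp2Hom b₁ b₂ b₃ b₄) = AlgHom.id ℂ P2 := by
    apply MvPolynomial.algHom_ext
    have h1' := congrArg (C : ℂ → P2) h1
    have h2' := congrArg (C : ℂ → P2) h2
    have h3' := congrArg (C : ℂ → P2) h3
    have h4' := congrArg (C : ℂ → P2) h4
    simp only [map_add, map_mul, map_one, map_zero] at h1' h2' h3' h4'
    intro i
    fin_cases i
    · simp
      linear_combination X 0 * h1' + X 1 * h2'
    · simp
      linear_combination X 0 * h3' + X 1 * h4'
  exact congrArg (fun f => f p) this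

theorem pderiv_comp2Hom (a₁ a₂ a₃ a₄ : ℂ) (p : P2) :
    pderiv 0 (comp2Hom a₁ a₂ a₃ a₄ p) = C a₁ * comp2Hom a₁ a₂ a₃ a₄ (pderiv 0 p)
      + C a₃ * comp2Hom a₁ a₂ a₃ a₄ (pderiv 1 p) ∧
    pderiv 1 (comp2Hom a₁ a₂ a₃ a₄ p) = C a₂ * comp2Hom a₁ a₂ a₃ a₄ (pderiv 0 p)
      + C a₄ * comp2Hom a₁ a₂ a₃ a₄ (pderiv 1 p) := by
  induction p using MvPolynomial.induction_on with
  | C a => simp [pderiv_C]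
  | add p q hp hq =>
    constructor
    · simp only [map_add, hp.1, hq.1]; ring
    · simp only [map_add, hp.2, hq.2]; ring
  | mul_X p i hp =>
    fin_cases i
    · constructor
      · simp [pderiv_mul, pderiv_C, hp.1, Pi.single_apply]; ring
      · simp [pderiv_mul, pderiv_C, hp.2, Pi.single_apply]; ring
    · constructor
      · simp [pderiv_mul, pderiv_C, hp.1, Pi.single_apply]; ring
      · simp [pderiv_mul, pderiv_C, hp.2, Pi.single_apply]; ring

theorem Dpoly_conj (a₁ a₂ a₃ a₄ : ℂ) (A B : P2) :
    Dpoly (C a₁ * comp2Hom a₁ a₂ a₃ a₄ A + C a₃ * comp2Hom a₁ a₂ a₃ a₄ B)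
      (C a₂ * comp2Hom a₁ a₂ a₃ a₄ A + C a₄ * comp2Hom a₁ a₂ a₃ a₄ B)
    = C ((a₁ * a₄ - a₂ * a₃) ^ 2) * comp2Hom a₁ a₂ a₃ a₄ (Dpoly A B) := by
  simp [Dpoly, pderiv_mul, pderiv_C, (pderiv_comp2Hom a₁ a₂ a₃ a₄ _).1,
    (pderiv_comp2Hom a₁ a₂ a₃ a₄ _).2]
  ring

theorem A3d_sub_B3d (d ν : ℕ) (h : ν ≤ d) : A3d d ν - B3d d ν = (X 0 + X 1) ^ d := by
  have e : (X 0 + X 1 : P2) ^ d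
      = ∑ i ∈ Finset.range (d + 1), C ((d.choose i : ℂ)) * X 0 ^ (d - i) * X 1 ^ i := by
    rw [add_comm, add_pow]
    apply Finset.sum_congr rfl
    intro i _
    simp
    ring
  rw [e, A3d, B3d, sub_neg_eq_add, add_comm, Finset.range_eq_Ico, Finset.range_eq_Ico,
    ← Finset.sum_Ico_consecutive _ (Nat.zero_le (ν + 1)) (by omega : ν + 1 ≤ d + 1)]
  rfl

theorem B3d_pderiv (d ν : ℕ) (h : ν + 1 ≤ d) :
    pderiv 1 (B3d d ν) - pderiv 0 (B3d d ν)
      = C ((d : ℂ) * ((d - 1).choose ν : ℂ)) * X 0 ^ (d - ν - 1) * X 1 ^ ν := by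
  induction ν with
  | zero =>
    simp [B3d, pderiv_mul, pderiv_pow, pderiv_C, Pi.single_apply]
  | succ n ih =>
    have e : B3d d (n + 1) = B3d d n
        - C ((d.choose (n + 1) : ℂ)) * X 0 ^ (d - (n + 1)) * X 1 ^ (n + 1) := by
      simp only [B3d]
      rw [Finset.sum_range_succ _ (n + 1)]
      ring
    have ih' := ih (by omega)
    rw [e]
    obtain ⟨m, rfl⟩ : ∃ m, d = m + n + 2 := ⟨d - n - 2, by omega⟩
    have s1 : m + n + 2 - (n + 1) = m + 1 := by omega
    have s2 : m + n + 2 - n - 1 = m + 1 := by omega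
    have s3 : m + n + 2 - (n + 1) - 1 = m := by omega
    have s4 : m + n + 2 - 1 = m + n + 1 := by omega
    rw [s2, s4] at ih'
    rw [s3, s1, s4]
    have b1 : (m + n + 2) * (m + n + 1).choose n = (m + n + 2).choose (n + 1) * (n + 1) :=
      Nat.add_one_mul_choose_eq (m + n + 1) n
    have b2 : (m + n + 2) * (m + n + 1).choose (n + 1) = (m + n + 2).choose (n + 1) * (m + 1) := by
      have := Nat.choose_mul_succ_eq (m + n + 1) (n + 1)
      rw [show m + n + 1 + 1 - (n + 1) = m + 1 by omega] at this
      rw [mul_comm]; exact this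
    have b1' := congrArg (Nat.cast : ℕ → P2) b1
    have b2' := congrArg (Nat.cast : ℕ → P2) b2
    push_cast at b1' b2'
    simp [pderiv_mul, pderiv_pow, pderiv_C, Pi.single_apply] at ih' ⊢
    have c2 : (C 2 : P2) = 2 := map_ofNat C 2
    rw [c2] at ih' ⊢
    linear_combination ih' + X 0 ^ (m + 1) * X 1 ^ n * b1' - X 0 ^ m * X 1 ^ (n + 1) * b2'

theorem Dpoly_A3d (d ν : ℕ) (h : ν + 1 ≤ d) :
    Dpoly (A3d d ν) (B3d d ν) = C ((d : ℂ) * ((d : ℂ) * ((d - 1).choose ν : ℂ)))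
      * X 1 ^ ν * X 0 ^ (d - ν - 1) * (X 0 + X 1) ^ (d - 1) := by
  have e : A3d d ν = B3d d ν + (X 0 + X 1) ^ d := by
    rw [← A3d_sub_B3d d ν (by omega)]; ring
  have hb := B3d_pderiv d ν h
  rw [Dpoly, e]
  simp [pderiv_mul, pderiv_pow, pderiv_C, Pi.single_apply] at hb ⊢
  linear_combination (d : P2) * (X 0 + X 1) ^ (d - 1) * hb

theorem term_homog (d i : ℕ) (h : i ≤ d) (c : ℂ) :
    (C c * X 0 ^ (d - i) * X 1 ^ i : P2).IsHomogeneous d := by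
  have := ((isHomogeneous_C (Fin 2) c).mul ((isHomogeneous_X ℂ (0 : Fin 2)).pow (d - i))).mul
    ((isHomogeneous_X ℂ (1 : Fin 2)).pow i)
  rwa [show 0 + 1 * (d - i) + 1 * i = d by omega] at this

theorem A3d_homog (d ν : ℕ) : (A3d d ν).IsHomogeneous d := by
  apply IsHomogeneous.sum
  intro i hi
  exact term_homog d i (Finset.mem_Icc.1 hi).2 _

theorem B3d_homog (d ν : ℕ) (h : ν ≤ d) : (B3d d ν).IsHomogeneous d := by
  apply IsHomogeneous.neg
  apply IsHomogeneous.sum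
  intro i hi
  have := Finset.mem_range.1 hi
  exact term_homog d i (by omega) _

theorem A3d_dvd (d ν : ℕ) : (X 1 : P2) ^ (ν + 1) ∣ A3d d ν := by
  apply Finset.dvd_sum
  intro i hi
  exact Dvd.dvd.mul_left (pow_dvd_pow _ (Finset.mem_Icc.1 hi).1) _

theorem B3d_dvd (d ν : ℕ) : (X 0 : P2) ^ (d - ν) ∣ B3d d ν := by
  rw [B3d, dvd_neg]
  apply Finset.dvd_sum
  intro i hi
  have := Finset.mem_range.1 hi
  exact Dvd.dvd.mul_right (Dvd.dvd.mul_left (pow_dvd_pow _ (by omega)) _) _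

theorem comp2Hom_homog (a₁ a₂ a₃ a₄ : ℂ) (d : ℕ) (p : P2) (h : p.IsHomogeneous d) :
    (comp2Hom a₁ a₂ a₃ a₄ p).IsHomogeneous d := by
  have := h.aeval (n := 1)
    (![C a₁ * X 0 + C a₂ * X 1, C a₃ * X 0 + C a₄ * X 1] : Fin 2 → P2) (by
    intro i
    fin_cases i
    · exact linear_form_homog a₁ a₂
    · exact linear_form_homog a₃ a₄)
  rw [one_mul] at this
  exact this

theorem C_mul_homog (c : ℂ) (d : ℕ) (p : P2) (h : p.IsHomogeneous d) :
    (C c * p).IsHomogeneous d := by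
  simpa using (isHomogeneous_C (Fin 2) c).mul h

/-- Homogeneous of degree `d` and divisible by a form of degree `> d` implies zero. -/
theorem eq_zero_of_dvd (d m : ℕ) (p q : P2) (hp : p.IsHomogeneous d) (hq : q.IsHomogeneous m)
    (hdm : d < m) (h : q ∣ p) : p = 0 := by
  by_contra h0
  obtain ⟨r, rfl⟩ := h
  have hq0 := left_ne_zero_of_mul h0
  have hr0 := right_ne_zero_of_mul h0
  have e := hp.totalDegree h0
  rw [totalDegree_mul_of_isDomain hq0 hr0, hq.totalDegree hq0] at e
  omega

theorem eq_const_of_dvd (d : ℕ) (p q : P2) (hp : p.IsHomogeneous d) (hq : q.IsHomogeneous d)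
    (h : q ∣ p) : ∃ k : ℂ, p = C k * q := by
  by_cases h0 : p = 0
  · exact ⟨0, by simp [h0]⟩
  obtain ⟨r, rfl⟩ := h
  have hq0 := left_ne_zero_of_mul h0
  have hr0 := right_ne_zero_of_mul h0
  have e := hp.totalDegree h0
  rw [totalDegree_mul_of_isDomain hq0 hr0, hq.totalDegree hq0] at e
  have : r.totalDegree = 0 := by omega
  rw [totalDegree_eq_zero_iff_eq_C] at this
  exact ⟨coeff 0 r, by rw [← this]; ring⟩

/-- Rigidity in normalised coordinates. -/
theorem normal_form (d ν : ℕ) (h : ν + 1 ≤ d) (A B : P2) (hA : A.IsHomogeneous d)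
    (hB : B.IsHomogeneous d) (h1 : (X 1 : P2) ^ (ν + 1) ∣ A) (h2 : (X 0 : P2) ^ (d - ν) ∣ B)
    (h3 : (X 0 + X 1 : P2) ^ d ∣ A - B) :
    ∃ k : ℂ, A = C k * A3d d ν ∧ B = C k * B3d d ν := by
  have hom : ((X 0 + X 1 : P2) ^ d).IsHomogeneous d := by
    simpa using ((isHomogeneous_X ℂ (0 : Fin 2)).add (isHomogeneous_X ℂ (1 : Fin 2))).pow d
  obtain ⟨k, hk⟩ := eq_const_of_dvd d _ _ (hA.sub hB) hom h3
  rw [← A3d_sub_B3d d ν (by omega)] at hk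
  have e : A - C k * A3d d ν = B - C k * B3d d ν := by linear_combination hk
  have d1 : (X 1 : P2) ^ (ν + 1) ∣ A - C k * A3d d ν :=
    dvd_sub h1 (Dvd.dvd.mul_left (A3d_dvd d ν) _)
  have d2 : (X 0 : P2) ^ (d - ν) ∣ A - C k * A3d d ν := by
    rw [e]; exact dvd_sub h2 (Dvd.dvd.mul_left (B3d_dvd d ν) _)
  have hrel : IsRelPrime (X 1 : P2) (X 0) := by
    have hi : Irreducible (X 1 : P2) := MvPolynomial.X_prime.irreducible
    rw [hi.isRelPrime_iff_not_dvd, X_dvd_X]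
    simp
  have hom2 : ((X 1 : P2) ^ (ν + 1) * X 0 ^ (d - ν)).IsHomogeneous (d + 1) := by
    have := ((isHomogeneous_X ℂ (1 : Fin 2)).pow (ν + 1)).mul
      ((isHomogeneous_X ℂ (0 : Fin 2)).pow (d - ν))
    rwa [show 1 * (ν + 1) + 1 * (d - ν) = d + 1 by omega] at this
  have z := eq_zero_of_dvd d (d + 1) _ _ (hA.sub (C_mul_homog k d _ (A3d_homog d ν))) hom2
    (by omega) (hrel.pow.mul_dvd d1 d2)
  exact ⟨k, sub_eq_zero.1 z, sub_eq_zero.1 (e ▸ z)⟩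

theorem forward_core (d ν : ℕ) (h : ν + 1 ≤ d) (A B : P2) (hA : A.IsHomogeneous d)
    (hB : B.IsHomogeneous d) (hAB : ¬ (A = 0 ∧ B = 0)) (p₁ q₁ p₂ q₂ : ℂ)
    (hΔ : p₂ * q₁ - q₂ * p₁ ≠ 0)
    (h1 : (C p₁ * X 0 + C q₁ * X 1 : P2) ^ (ν + 1) ∣ C q₁ * A - C p₁ * B)
    (h2 : (C p₂ * X 0 + C q₂ * X 1 : P2) ^ (d - ν) ∣ C q₂ * A - C p₂ * B)
    (h3 : (C (p₁ + p₂) * X 0 + C (q₁ + q₂) * X 1 : P2) ^ d ∣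
      C (q₁ + q₂) * A - C (p₁ + p₂) * B) :
    LinConj A B (A3d d ν) (B3d d ν) := by
  obtain ⟨Δ, hΔe⟩ : ∃ Δ, Δ = p₂ * q₁ - q₂ * p₁ := ⟨_, rfl⟩
  rw [← hΔe] at hΔ
  obtain ⟨a₁, e1⟩ : ∃ a, a = q₁ / Δ := ⟨_, rfl⟩
  obtain ⟨a₂, e2⟩ : ∃ a, a = -q₂ / Δ := ⟨_, rfl⟩
  obtain ⟨a₃, e3⟩ : ∃ a, a = -p₁ / Δ := ⟨_, rfl⟩
  obtain ⟨a₄, e4⟩ : ∃ a, a = p₂ / Δ := ⟨_, rfl⟩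
  have r1 : p₂ * a₁ + q₂ * a₃ = 1 := by
    rw [e1, e3]; field_simp; rw [hΔe]; ring
  have r2 : p₂ * a₂ + q₂ * a₄ = 0 := by rw [e2, e4]; ring
  have r3 : p₁ * a₁ + q₁ * a₃ = 0 := by rw [e1, e3]; ring
  have r4 : p₁ * a₂ + q₁ * a₄ = 1 := by
    rw [e2, e4]; field_simp; rw [hΔe]; ring
  have C1 := congrArg (C : ℂ → P2) r1
  have C2 := congrArg (C : ℂ → P2) r2
  have C3 := congrArg (C : ℂ → P2) r3
  have C4 := congrArg (C : ℂ → P2) r4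
  simp only [map_add, map_mul, map_one, map_zero] at C1 C2 C3 C4
  have L1 : comp2Hom a₁ a₂ a₃ a₄ (C p₁ * X 0 + C q₁ * X 1) = X 1 := by
    simp; linear_combination X 0 * C3 + X 1 * C4
  have L2 : comp2Hom a₁ a₂ a₃ a₄ (C p₂ * X 0 + C q₂ * X 1) = X 0 := by
    simp; linear_combination X 0 * C1 + X 1 * C2
  have L3 : comp2Hom a₁ a₂ a₃ a₄ (C (p₁ + p₂) * X 0 + C (q₁ + q₂) * X 1) = X 0 + X 1 := by
    simp; linear_combination X 0 * (C1 + C3) + X 1 * (C2 + C4)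
  have D1 := map_dvd (comp2Hom a₁ a₂ a₃ a₄) h1
  have D2 := map_dvd (comp2Hom a₁ a₂ a₃ a₄) h2
  have D3 := map_dvd (comp2Hom a₁ a₂ a₃ a₄) h3
  rw [map_pow, L1] at D1
  rw [map_pow, L2] at D2
  rw [map_pow, L3] at D3
  simp only [map_sub, map_mul, comp2Hom_C] at D1 D2 D3
  have s1 : q₁ = Δ * a₁ := by rw [e1]; field_simp
  have s2 : q₂ = - (Δ * a₂) := by rw [e2]; field_simp
  have s3 : p₁ = - (Δ * a₃) := by rw [e3]; field_simp
  have s4 : p₂ = Δ * a₄ := by rw [e4]; field_simp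
  have hu : IsUnit (C Δ : P2) := (IsUnit.mk0 Δ hΔ).map C
  obtain ⟨k, hk1, hk2⟩ := normal_form d ν h
    (C a₁ * comp2Hom a₁ a₂ a₃ a₄ A + C a₃ * comp2Hom a₁ a₂ a₃ a₄ B)
    (C a₂ * comp2Hom a₁ a₂ a₃ a₄ A + C a₄ * comp2Hom a₁ a₂ a₃ a₄ B)
    ((C_mul_homog _ _ _ (comp2Hom_homog _ _ _ _ _ _ hA)).add
      (C_mul_homog _ _ _ (comp2Hom_homog _ _ _ _ _ _ hB)))
    ((C_mul_homog _ _ _ (comp2Hom_homog _ _ _ _ _ _ hA)).add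
      (C_mul_homog _ _ _ (comp2Hom_homog _ _ _ _ _ _ hB)))
    (by
      rw [← hu.dvd_mul_left]
      convert D1 using 1
      rw [s1, s3]; simp; ring)
    (by
      rw [← hu.dvd_mul_left, ← dvd_neg]
      convert D2 using 1
      rw [s2, s4]; simp; ring)
    (by
      rw [← hu.dvd_mul_left]
      convert D3 using 1
      rw [s1, s2, s3, s4]; simp; ring)
  have hdet : Δ * (a₁ * a₄ - a₂ * a₃) = 1 := by
    linear_combination r1 - a₁ * s4 - a₃ * s2
  refine ⟨a₁, a₂, a₃, a₄, k, right_ne_zero_of_mul_eq_one hdet, ?_, hk1, hk2⟩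
  rintro rfl
  apply hAB
  have hdet' := congrArg (C : ℂ → P2) hdet
  simp only [map_mul, map_sub, map_one] at hdet'
  simp only [map_zero, zero_mul] at hk1 hk2
  have zA : comp2Hom a₁ a₂ a₃ a₄ A = 0 := by
    linear_combination C Δ * (C a₄ * hk1 - C a₃ * hk2) - comp2Hom a₁ a₂ a₃ a₄ A * hdet'
  have zB : comp2Hom a₁ a₂ a₃ a₄ B = 0 := by
    linear_combination C Δ * (C a₁ * hk2 - C a₂ * hk1) - comp2Hom a₁ a₂ a₃ a₄ B * hdet'
  have inv := comp2Hom_inv p₂ q₂ p₁ q₁ a₁ a₂ a₃ a₄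
    (by linear_combination hdet + a₁ * s4 + a₂ * s3)
    (by rw [s1, s2]; ring) (by rw [s3, s4]; ring)
    (by linear_combination hdet + a₃ * s2 + a₄ * s1)
  exact ⟨by rw [← inv A, zA, map_zero], by rw [← inv B, zB, map_zero]⟩

theorem det_ne_zero_of_not_prop (p₁ q₁ p₂ q₂ : ℂ) (h0 : (C p₂ * X 0 + C q₂ * X 1 : P2) ≠ 0)
    (h : ¬ Proportional (C p₁ * X 0 + C q₁ * X 1) (C p₂ * X 0 + C q₂ * X 1)) :
    p₂ * q₁ - q₂ * p₁ ≠ 0 := by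
  intro e
  apply h
  by_cases hp : p₂ = 0
  · by_cases hq : q₂ = 0
    · simp [hp, hq] at h0
    · refine ⟨q₁ / q₂, Or.inl ?_⟩
      have hp1 : p₁ = q₁ / q₂ * p₂ := by field_simp; linear_combination -e
      have hq1 : q₁ = q₁ / q₂ * q₂ := by field_simp
      rw [mul_add, ← mul_assoc, ← mul_assoc, ← map_mul, ← map_mul, ← hp1, ← hq1]
  · refine ⟨p₁ / p₂, Or.inl ?_⟩
    have hp1 : p₁ = p₁ / p₂ * p₂ := by field_simp
    have hq1 : q₁ = p₁ / p₂ * q₂ := by field_simp; linear_combination e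
    rw [mul_add, ← mul_assoc, ← mul_assoc, ← map_mul, ← map_mul, ← hp1, ← hq1]

theorem scale_pow_dvd (t p q : ℂ) (ht : t ≠ 0) (n : ℕ) (A B : P2)
    (h : (C p * X 0 + C q * X 1 : P2) ^ n ∣ C q * A - C p * B) :
    (C (t * p) * X 0 + C (t * q) * X 1 : P2) ^ n ∣ C (t * q) * A - C (t * p) * B := by
  have hu : IsUnit (C t : P2) := (IsUnit.mk0 t ht).map C
  have e1 : (C (t * p) * X 0 + C (t * q) * X 1 : P2) = C t * (C p * X 0 + C q * X 1) := by
    simp only [map_mul]; ring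
  have e2 : C (t * q) * A - C (t * p) * B = C t * (C q * A - C p * B) := by
    simp only [map_mul]; ring
  rw [e1, e2, mul_pow, (hu.pow n).mul_left_dvd, hu.dvd_mul_left]
  exact h

theorem Proportional.map {l l' : P2} (h : Proportional l l') (a₁ a₂ a₃ a₄ : ℂ) :
    Proportional (comp2Hom a₁ a₂ a₃ a₄ l) (comp2Hom a₁ a₂ a₃ a₄ l') := by
  obtain ⟨t, rfl | rfl⟩ := h
  · exact ⟨t, Or.inl (by simp)⟩
  · exact ⟨t, Or.inr (by simp)⟩

theorem not_prop_aux (l l' : P2) (u v : Fin 2 → ℂ) (h1 : eval u l = 0) (h2 : eval u l' ≠ 0)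
    (h3 : eval v l ≠ 0) (h4 : eval v l' = 0) : ¬ Proportional l l' := by
  rintro ⟨t, h | h⟩
  · apply h3; rw [h]; simp [h4]
  · apply h2; rw [h]; simp [h1]

/-- A convex homogeneous foliation `ω = A dx + B dy` of degree `d ≥ 3` has type
`1·R_ν + 1·R_{d−ν−1} + 1·R_{d−1}` (with `1 ≤ ν ≤ d−2`) if and only if `ω` is linearly
conjugate to `ω₃^{d,ν}`. -/
theorem type_R_nu_classification_iff_conj
    (d ν : ℕ) (hd : 3 ≤ d) (hν : 1 ≤ ν) (hν' : ν ≤ d - 2)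
    (A B : P2) (hA : A.IsHomogeneous d) (hB : B.IsHomogeneous d)
    (hcop : NoCommonFactor A B) (hconv : IsConvexPair A B) :
    (∃ c : ℂ, c ≠ 0 ∧ ∃ l₁ l₂ l₃ : P2,
        l₁.IsHomogeneous 1 ∧ l₂.IsHomogeneous 1 ∧ l₃.IsHomogeneous 1 ∧
        l₁ ≠ 0 ∧ l₂ ≠ 0 ∧ l₃ ≠ 0 ∧
        ¬ Proportional l₁ l₂ ∧ ¬ Proportional l₁ l₃ ∧ ¬ Proportional l₂ l₃ ∧
        Dpoly A B = C c * l₁ ^ ν * l₂ ^ (d - ν - 1) * l₃ ^ (d - 1)) ↔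
      LinConj A B (A3d d ν) (B3d d ν) := by
  have hd0 : d ≠ 0 := by omega
  constructor
  · rintro ⟨c, hc, l₁, l₂, l₃, hl₁, hl₂, hl₃, z₁, z₂, z₃, n12, n13, n23, hD⟩
    have D1 : l₁ ^ ν ∣ Dpoly A B :=
      ⟨C c * l₂ ^ (d - ν - 1) * l₃ ^ (d - 1), by rw [hD]; ring⟩
    have D2 : l₂ ^ (d - ν - 1) ∣ Dpoly A B :=
      ⟨C c * l₁ ^ ν * l₃ ^ (d - 1), by rw [hD]; ring⟩
    have D3 : l₃ ^ (d - 1) ∣ Dpoly A B :=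
      ⟨C c * l₁ ^ ν * l₂ ^ (d - ν - 1), by rw [hD]; ring⟩
    have T1 := hconv l₁ hl₁ z₁ ((dvd_pow_self _ (by omega)).trans D1)
    have T2 := hconv l₂ hl₂ z₂ ((dvd_pow_self _ (by omega)).trans D2)
    have T3 := hconv l₃ hl₃ z₃ ((dvd_pow_self _ (by omega)).trans D3)
    obtain ⟨p₁, q₁, rfl⟩ := linear_form_eq l₁ hl₁
    obtain ⟨p₂, q₂, rfl⟩ := linear_form_eq l₂ hl₂
    obtain ⟨p₃, q₃, rfl⟩ := linear_form_eq l₃ hl₃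
    have F1 := local_order d hd0 A B hA hB hcop p₁ q₁ z₁ T1 _ D1
    have F2 := local_order d hd0 A B hA hB hcop p₂ q₂ z₂ T2 _ D2
    have F3 := local_order d hd0 A B hA hB hcop p₃ q₃ z₃ T3 _ D3
    rw [show d - ν - 1 + 1 = d - ν by omega] at F2
    rw [show d - 1 + 1 = d by omega] at F3
    have Δ12 := det_ne_zero_of_not_prop _ _ _ _ z₂ n12
    have Δ13 := det_ne_zero_of_not_prop _ _ _ _ z₃ n13
    have Δ23 := det_ne_zero_of_not_prop _ _ _ _ z₃ n23
    obtain ⟨Δ, hΔ⟩ : ∃ Δ, Δ = p₂ * q₁ - q₂ * p₁ := ⟨_, rfl⟩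
    rw [← hΔ] at Δ12
    obtain ⟨α, hα⟩ : ∃ α, α = -(p₃ * q₂ - q₃ * p₂) / Δ := ⟨_, rfl⟩
    obtain ⟨β, hβ⟩ : ∃ β, β = (p₃ * q₁ - q₃ * p₁) / Δ := ⟨_, rfl⟩
    have α0 : α ≠ 0 := by rw [hα]; exact div_ne_zero (neg_ne_zero.2 Δ23) Δ12
    have β0 : β ≠ 0 := by rw [hβ]; exact div_ne_zero Δ13 Δ12
    have ep : p₃ = α * p₁ + β * p₂ := by
      rw [hα, hβ]; field_simp; rw [hΔ]; ring
    have eq : q₃ = α * q₁ + β * q₂ := by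
      rw [hα, hβ]; field_simp; rw [hΔ]; ring
    rw [ep, eq] at F3
    refine forward_core d ν (by omega) A B hA hB ?_ (α * p₁) (α * q₁) (β * p₂) (β * q₂) ?_
      (scale_pow_dvd α _ _ α0 _ A B F1) (scale_pow_dvd β _ _ β0 _ A B F2) F3
    · rintro ⟨rfl, rfl⟩
      exact (MvPolynomial.X_prime (R := ℂ) (i := (0 : Fin 2))).not_isUnit
        (hcop _ (dvd_zero _) (dvd_zero _))
    · rw [show β * p₂ * (α * q₁) - β * q₂ * (α * p₁) = β * α * Δ by rw [hΔ]; ring]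
      exact mul_ne_zero (mul_ne_zero β0 α0) Δ12
  · rintro ⟨a₁, a₂, a₃, a₄, lam, hdet, hlam, e1, e2⟩
    rw [comp2_eq, comp2_eq] at e1 e2
    have key := Dpoly_conj a₁ a₂ a₃ a₄ A B
    rw [e1, e2] at key
    have hl : Dpoly (C lam * A3d d ν) (C lam * B3d d ν)
        = C (lam ^ 2) * Dpoly (A3d d ν) (B3d d ν) := by
      simp [Dpoly]; ring
    rw [hl, Dpoly_A3d d ν (by omega)] at key
    obtain ⟨δ, hδ⟩ : ∃ δ, δ = a₁ * a₄ - a₂ * a₃ := ⟨_, rfl⟩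
    rw [← hδ] at hdet key
    have invL := comp2Hom_inv (a₄ / δ) (-a₂ / δ) (-a₃ / δ) (a₁ / δ) a₁ a₂ a₃ a₄
      (by field_simp; rw [hδ]; ring) (by ring) (by ring) (by field_simp; rw [hδ]; ring)
    have invR := comp2Hom_inv a₁ a₂ a₃ a₄ (a₄ / δ) (-a₂ / δ) (-a₃ / δ) (a₁ / δ)
      (by field_simp; rw [hδ]; ring) (by ring) (by ring) (by field_simp; rw [hδ]; ring)
    generalize hψ : comp2Hom (a₄ / δ) (-a₂ / δ) (-a₃ / δ) (a₁ / δ) = ψ at invL invR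
    have hhom : ∀ l : P2, l.IsHomogeneous 1 → (ψ l).IsHomogeneous 1 := fun l h => by
      rw [← hψ]; exact comp2Hom_homog _ _ _ _ _ _ h
    have hne : ∀ l : P2, l ≠ 0 → ψ l ≠ 0 := fun l h h' => by
      apply h; rw [← invR l, h', map_zero]
    have hnp : ∀ l l' : P2, ¬ Proportional l l' → ¬ Proportional (ψ l) (ψ l') :=
      fun l l' h h' => by
        apply h
        have := h'.map a₁ a₂ a₃ a₄
        rwa [invR, invR] at this
    have hψC : ∀ c : ℂ, ψ (C c) = C c := fun c => by rw [← hψ]; simp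
    have x0 := isHomogeneous_X ℂ (0 : Fin 2)
    have x1 := isHomogeneous_X ℂ (1 : Fin 2)
    refine ⟨(δ ^ 2)⁻¹ * (lam ^ 2 * ((d : ℂ) * ((d : ℂ) * ((d - 1).choose ν : ℂ)))), ?_,
      ψ (X 1), ψ (X 0), ψ (X 0 + X 1), hhom _ x1, hhom _ x0, hhom _ (x0.add x1),
      hne _ (X_ne_zero _), hne _ (X_ne_zero _), hne _ ?_, hnp _ _ ?_, hnp _ _ ?_, hnp _ _ ?_, ?_⟩
    · have hch : ((d - 1).choose ν : ℂ) ≠ 0 :=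
        Nat.cast_ne_zero.2 (Nat.choose_pos (by omega)).ne'
      have hdc : (d : ℂ) ≠ 0 := Nat.cast_ne_zero.2 hd0
      positivity
    · intro h
      have := congrArg (eval ![1, 0]) h
      simp at this
    · exact not_prop_aux _ _ ![1, 0] ![0, 1] (by simp) (by simp) (by simp) (by simp)
    · exact not_prop_aux _ _ ![1, 0] ![1, -1] (by simp) (by simp) (by simp) (by simp)
    · exact not_prop_aux _ _ ![0, 1] ![1, -1] (by simp) (by simp) (by simp) (by simp)
    · have k2 := congrArg ψ key
      simp only [map_mul ψ, map_pow ψ, hψC, invL] at k2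
      have hC : (C ((δ ^ 2)⁻¹) : P2) * C (δ ^ 2) = 1 := by
        rw [← map_mul, inv_mul_cancel₀ (pow_ne_zero 2 hdet), map_one]
      rw [map_mul C, map_mul C (lam ^ 2)]
      linear_combination (- C ((δ ^ 2)⁻¹)) * k2 - Dpoly A B * hC
end
end
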